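/- arXiv:2209.10940 — 2 statements merged into one kernel-verified Lean document; each statement's English description precedes it below -/
import Mathlib

section
/- If a closed scheme Φ(P₁,…,Pₙ) is absolutely realizable, then for any list of schemes Ψ₁,…,Ψₙ acceptable for substitution in Φ(P₁,…,Pₙ), the universal closure of the substitutional instance Φ(Ψ₁,…,Ψₙ) is absolutely realizable. -/
namespace Cpc

/-! ### Recursion-theoretic preliminaries -/

/-- Kleene application `{e}(a)`: the unary partial recursive function with Gödel number `e`,
applied to `a`. -/
def K (e a : ℕ) : Part ℕ := Nat.Partrec.Code.eval (Denumerable.ofNat Nat.Partrec.Code e) a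

/-- `(e)ᵢ`: the exponent of the `i`-th prime in the prime factorization of `e`. -/
noncomputable def pexp (i e : ℕ) : ℕ := Nat.factorization e (Nat.nth Nat.Prime i)

/-! ### The Cantor pairing function and the enumeration `g` of finitely supported functions -/

/-- The Cantor pairing `c(x,y) = (x+y)(x+y+1)/2 + x`. -/
def cpair (x y : ℕ) : ℕ := (x + y) * (x + y + 1) / 2 + x

/-- Simultaneous computation of the two inverse projections of the Cantor pairing. -/
def lrAux : ℕ → ℕ × ℕ
  | 0 => (0, 0)
  | n + 1 =>
    let p := lrAux n
    if p.2 = 0 then (0, p.1 + 1) else (p.1 + 1, p.2 - 1)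

/-- The first projection `l` of the Cantor pairing. -/
def cl (n : ℕ) : ℕ := (lrAux n).1

/-- The second projection `r` of the Cantor pairing. -/
def cr (n : ℕ) : ℕ := (lrAux n).2

/-- `l*(x,y)`: `l*(x,0) = x`, `l*(x,y+1) = l(l*(x,y))`. -/
def lstar (x : ℕ) : ℕ → ℕ
  | 0 => x
  | y + 1 => cl (lstar x y)

/-- `g(x,y) = r(l*(x,y))`: the enumeration of all finitely supported functions `ℕ → ℕ`. -/
def g (x y : ℕ) : ℕ := cr (lstar x y)

/-- `h(x,y,0) = c(l(x),y)`, `h(x,y,z+1) = c(h(l(x),y,z), r(x))`. -/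
def h : ℕ → ℕ → ℕ → ℕ
  | x, y, 0 => cpair (cl x) y
  | x, y, z + 1 => cpair (h (cl x) y z) (cr x)


/-! ### The predicate language `L*` -/

/-- Individual terms of the language `L*`: individual variables (named by natural numbers)
and individual constants for all natural numbers. -/
inductive PTerm : Type
  | var (v : ℕ)
  | const (c : ℕ)
  deriving DecidableEq

/-- Evaluation of a term under a valuation of the individual variables. -/
def PTerm.eval (ρ : ℕ → ℕ) : PTerm → ℕ
  | var v => ρ v
  | const c => c

/-- The (free) variables of a term. -/
def PTerm.fv : PTerm → Finset ℕ
  | var v => {v}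
  | const _ => ∅

/-- Formulas of the predicate language `L*`: `⊥`, atomic formulas `Pⁿᵢ(t₁,…,tₙ)`
(where the predicate variable `Pⁿᵢ` is recorded by its index `i`; its arity `n` is the
length of the argument list), and the connectives and quantifiers. -/
inductive PFml : Type
  | bot
  | atom (i : ℕ) (args : List PTerm)
  | and (φ ψ : PFml)
  | or (φ ψ : PFml)
  | imp (φ ψ : PFml)
  | all (x : ℕ) (φ : PFml)
  | ex (x : ℕ) (φ : PFml)

/-- `¬Φ` abbreviates `Φ → ⊥`. -/
def PFml.not (φ : PFml) : PFml := φ.imp .bot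

/-- `Φ ↔ Ψ` abbreviates `(Φ → Ψ) & (Ψ → Φ)`. -/
def PFml.iff (φ ψ : PFml) : PFml := (φ.imp ψ).and (ψ.imp φ)

/-- Conjunction of a list of formulas. -/
def bigAnd (l : List PFml) : PFml := l.foldr PFml.and (PFml.bot.imp PFml.bot)

/-- The free variables of a formula. -/
def PFml.fv : PFml → Finset ℕ
  | bot => ∅
  | atom _ args => args.foldr (fun t s => t.fv ∪ s) ∅
  | and φ ψ => φ.fv ∪ ψ.fv
  | or φ ψ => φ.fv ∪ ψ.fv
  | imp φ ψ => φ.fv ∪ ψ.fv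
  | all x φ => φ.fv.erase x
  | ex x φ => φ.fv.erase x

/-- The bound variables of a formula. -/
def PFml.bv : PFml → Finset ℕ
  | bot => ∅
  | atom _ _ => ∅
  | and φ ψ => φ.bv ∪ ψ.bv
  | or φ ψ => φ.bv ∪ ψ.bv
  | imp φ ψ => φ.bv ∪ ψ.bv
  | all x φ => insert x φ.bv
  | ex x φ => insert x φ.bv

/-- A formula is closed if it has no free variables. -/
def PFml.Closed (φ : PFml) : Prop := φ.fv = ∅

/-- Simultaneous substitution of terms for variables in a term. -/
def PTerm.msub (s : ℕ → PTerm) : PTerm → PTerm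
  | var v => s v
  | const c => const c

/-- Simultaneous (naive, i.e. non-capture-avoiding) substitution of terms for the free
occurrences of variables in a formula. -/
def PFml.msub (s : ℕ → PTerm) : PFml → PFml
  | bot => bot
  | atom i args => atom i (args.map (PTerm.msub s))
  | and φ ψ => (φ.msub s).and (ψ.msub s)
  | or φ ψ => (φ.msub s).or (ψ.msub s)
  | imp φ ψ => (φ.msub s).imp (ψ.msub s)
  | all x φ => all x (φ.msub fun v => if v = x then .var x else s v)
  | ex x φ => ex x (φ.msub fun v => if v = x then .var x else s v)

/-- The substitution replacing the single variable `x` by the term `t`. -/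
def sub1 (x : ℕ) (t : PTerm) : ℕ → PTerm := fun v => if v = x then t else .var v

/-- The simultaneous substitution `s` is free for (admissible in) the formula, i.e. no
variable of a substituted term gets captured by a quantifier. -/
def PFml.FreeForM (s : ℕ → PTerm) : PFml → Prop
  | bot => True
  | atom _ _ => True
  | and φ ψ => φ.FreeForM s ∧ ψ.FreeForM s
  | or φ ψ => φ.FreeForM s ∧ ψ.FreeForM s
  | imp φ ψ => φ.FreeForM s ∧ ψ.FreeForM s
  | all x φ => (∀ v ∈ φ.fv, v ≠ x → x ∉ (s v).fv) ∧
      φ.FreeForM (fun v => if v = x then .var x else s v)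
  | ex x φ => (∀ v ∈ φ.fv, v ≠ x → x ∉ (s v).fv) ∧
      φ.FreeForM (fun v => if v = x then .var x else s v)

/-! ### Interpretations and realizability -/

/-- An `n`-ary generalized predicate. -/
def GenPred (n : ℕ) : Type := (Fin n → ℕ) → Set ℕ

/-- An interpretation assigns to each predicate variable `Pⁿᵢ` an `n`-ary generalized
predicate. -/
def Interp : Type := (n : ℕ) → ℕ → GenPred n

/-- The realizability relation `e rᶠ Φ` (relative to a valuation `ρ` of the individual
variables). -/
def Realizes (f : Interp) : (ℕ → ℕ) → ℕ → PFml → Prop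
  | _, _, .bot => False
  | ρ, e, .atom i args => e ∈ f args.length i (fun j => (args.get j).eval ρ)
  | ρ, e, .and φ ψ => Realizes f ρ (pexp 0 e) φ ∧ Realizes f ρ (pexp 1 e) ψ
  | ρ, e, .or φ ψ => (pexp 0 e = 0 ∧ Realizes f ρ (pexp 1 e) φ) ∨
      (pexp 0 e = 1 ∧ Realizes f ρ (pexp 1 e) ψ)
  | ρ, e, .imp φ ψ => ∀ a, Realizes f ρ a φ → ∃ b ∈ K e a, Realizes f ρ b ψ
  | ρ, e, .all x φ => ∀ a, ∃ b ∈ K e a, Realizes f (Function.update ρ x a) b φ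
  | ρ, e, .ex x φ => Realizes f (Function.update ρ x (pexp 0 e)) (pexp 1 e) φ

/-- The zero valuation, used for closed formulas. -/
def rho0 : ℕ → ℕ := fun _ => 0

/-- The closed formula `Φ` is realizable in the interpretation `f`. -/
def FRealizable (f : Interp) (φ : PFml) : Prop := ∃ e, Realizes f rho0 e φ

/-- The closed predicate formula `Φ` is (uniformly) absolutely realizable. -/
def AbsRealizable (φ : PFml) : Prop := ∃ e, ∀ f : Interp, Realizes f rho0 e φ


/-! ### The arithmetical fragment: `Z,E,S,A,M` are the predicate variables
`P¹₀, P²₀, P²₁, P³₀, P³₁`. -/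

/-- `Z(t)`, i.e. the atomic formula `P¹₀(t)`. -/
def vZ (t : PTerm) : PFml := .atom 0 [t]
/-- `E(t,u)`, i.e. `P²₀(t,u)`. -/
def vE (t u : PTerm) : PFml := .atom 0 [t, u]
/-- `S(t,u)`, i.e. `P²₁(t,u)`. -/
def vS (t u : PTerm) : PFml := .atom 1 [t, u]
/-- `A(t,u,w)`, i.e. `P³₀(t,u,w)`. -/
def vA (t u w : PTerm) : PFml := .atom 0 [t, u, w]
/-- `M(t,u,w)`, i.e. `P³₁(t,u,w)`. -/
def vM (t u w : PTerm) : PFml := .atom 1 [t, u, w]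

/-- The standard reading of the arithmetical predicate symbols. -/
def arithStd : (n : ℕ) → ℕ → (Fin n → ℕ) → Prop
  | 1, 0, v => v 0 = 0
  | 2, 0, v => v 0 = v 1
  | 2, 1, v => v 0 + 1 = v 1
  | 3, 0, v => v 0 + v 1 = v 2
  | 3, 1, v => v 0 * v 1 = v 2
  | _, _, _ => False

/-- The standard interpretation: an atomic arithmetical statement is realized by `e`
iff `e = 0` and the statement is true. -/
def stdInterp : Interp := fun n i v => {e | e = 0 ∧ arithStd n i v}

/-- Classical truth of an arithmetical formula in the standard model (atoms of
non-arithmetical predicate variables are read as false). -/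
def TrueStd : (ℕ → ℕ) → PFml → Prop
  | _, .bot => False
  | ρ, .atom i args => arithStd args.length i (fun j => (args.get j).eval ρ)
  | ρ, .and φ ψ => TrueStd ρ φ ∧ TrueStd ρ ψ
  | ρ, .or φ ψ => TrueStd ρ φ ∨ TrueStd ρ ψ
  | ρ, .imp φ ψ => TrueStd ρ φ → TrueStd ρ ψ
  | ρ, .all x φ => ∀ a, TrueStd (Function.update ρ x a) φ
  | ρ, .ex x φ => ∃ a, TrueStd (Function.update ρ x a) φ

/-- The pairs (arity, index) naming the arithmetical predicate symbols `Z,E,S,A,M`. -/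
def arithSlot (n i : ℕ) : Prop := (n = 1 ∧ i = 0) ∨ (n = 2 ∧ i ≤ 1) ∨ (n = 3 ∧ i ≤ 1)

/-- The `Ar`-formula `x ≤ t`, i.e. `∃z A(z,x,t)`. -/
def leF (z x : ℕ) (t : PTerm) : PFml := .ex z (vA (.var z) (.var x) t)

/-- `Δ₀`-formulas of the language `Ar`. -/
inductive IsDelta0 : PFml → Prop
  | bot : IsDelta0 .bot
  | atom {i : ℕ} {args : List PTerm} : arithSlot args.length i → IsDelta0 (.atom i args)
  | and {φ ψ} : IsDelta0 φ → IsDelta0 ψ → IsDelta0 (φ.and ψ)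
  | or {φ ψ} : IsDelta0 φ → IsDelta0 ψ → IsDelta0 (φ.or ψ)
  | imp {φ ψ} : IsDelta0 φ → IsDelta0 ψ → IsDelta0 (φ.imp ψ)
  | ball {x z : ℕ} {t : PTerm} {φ} : x ∉ t.fv → z ∉ t.fv → z ≠ x → IsDelta0 φ →
      IsDelta0 (.all x ((leF z x t).imp φ))
  | bex {x z : ℕ} {t : PTerm} {φ} : x ∉ t.fv → z ∉ t.fv → z ≠ x → IsDelta0 φ →
      IsDelta0 (.ex x ((leF z x t).and φ))

/-- `Σ`-formulas of the language `Ar`. -/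
inductive IsSigma : PFml → Prop
  | delta0 {φ} : IsDelta0 φ → IsSigma φ
  | and {φ ψ} : IsSigma φ → IsSigma ψ → IsSigma (φ.and ψ)
  | or {φ ψ} : IsSigma φ → IsSigma ψ → IsSigma (φ.or ψ)
  | ball {x z : ℕ} {t : PTerm} {φ} : x ∉ t.fv → z ∉ t.fv → z ≠ x → IsSigma φ →
      IsSigma (.all x ((leF z x t).imp φ))
  | bex {x z : ℕ} {t : PTerm} {φ} : x ∉ t.fv → z ∉ t.fv → z ≠ x → IsSigma φ →
      IsSigma (.ex x ((leF z x t).and φ))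
  | ex {x : ℕ} {φ} : IsSigma φ → IsSigma (.ex x φ)




/-- Iterated universal quantification. -/
def alls (xs : List ℕ) (φ : PFml) : PFml := xs.foldr PFml.all φ

open PTerm (var const) in
/-- The axioms `A₁ – A₂₅` of the predicate version `IRA*` of intuitionistic Robinson
arithmetic. -/
def IRAstarAxioms : List PFml := [
  alls [0,1,2] (((vS (var 0) (var 2)).and (vS (var 1) (var 2))).imp (vE (var 0) (var 1))),
  alls [0,1] ((vS (var 0) (var 1)).imp (vZ (var 1)).not),
  alls [0,1,2] (((vE (var 0) (var 1)).and (vE (var 0) (var 2))).imp (vE (var 1) (var 2))),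
  alls [0,1,2] (((vE (var 0) (var 1)).and (vS (var 0) (var 2))).imp (vS (var 1) (var 2))),
  alls [0,1] ((vZ (var 1)).imp (vA (var 0) (var 1) (var 0))),
  alls [0,1,2,3,4] ((((vS (var 1) (var 2)).and (vA (var 0) (var 1) (var 3))).and
      (vS (var 3) (var 4))).imp (vA (var 0) (var 2) (var 4))),
  alls [0,1] ((vZ (var 1)).imp (vM (var 0) (var 1) (var 1))),
  alls [0,1,2,3,4] ((((vS (var 1) (var 2)).and (vM (var 0) (var 1) (var 3))).and
      (vA (var 3) (var 0) (var 4))).imp (vM (var 0) (var 2) (var 4))),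
  alls [0,1,2,3] (((vE (var 0) (var 1)).and (vA (var 0) (var 2) (var 3))).imp
      (vA (var 1) (var 2) (var 3))),
  alls [0,1,2,3] (((vE (var 1) (var 2)).and (vA (var 0) (var 1) (var 3))).imp
      (vA (var 0) (var 2) (var 3))),
  alls [0,1,2,3] (((vE (var 0) (var 1)).and (vM (var 0) (var 2) (var 3))).imp
      (vM (var 1) (var 2) (var 3))),
  alls [0,1,2,3] (((vE (var 1) (var 2)).and (vM (var 0) (var 1) (var 3))).imp
      (vM (var 0) (var 2) (var 3))),
  PFml.all 0 ((vZ (var 0)).or (.ex 1 (vS (var 1) (var 0)))),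
  PFml.ex 0 (vZ (var 0)),
  alls [0,1] (((vZ (var 0)).and (vZ (var 1))).imp (vE (var 0) (var 1))),
  alls [0,1] (((vE (var 0) (var 1)).and (vZ (var 0))).imp (vZ (var 1))),
  PFml.all 0 (.ex 1 (vS (var 0) (var 1))),
  alls [0,1,2] (((vS (var 0) (var 1)).and (vS (var 0) (var 2))).imp (vE (var 1) (var 2))),
  alls [0,1,2] (((vS (var 0) (var 1)).and (vE (var 1) (var 2))).imp (vS (var 0) (var 2))),
  alls [0,1] (.ex 2 (vA (var 0) (var 1) (var 2))),
  alls [0,1,2,3] (((vA (var 0) (var 1) (var 2)).and (vA (var 0) (var 1) (var 3))).imp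
      (vE (var 2) (var 3))),
  alls [0,1,2,3] (((vA (var 0) (var 1) (var 2)).and (vE (var 2) (var 3))).imp
      (vA (var 0) (var 1) (var 3))),
  alls [0,1] (.ex 2 (vM (var 0) (var 1) (var 2))),
  alls [0,1,2,3] (((vM (var 0) (var 1) (var 2)).and (vM (var 0) (var 1) (var 3))).imp
      (vE (var 2) (var 3))),
  alls [0,1,2,3] (((vM (var 0) (var 1) (var 2)).and (vE (var 2) (var 3))).imp
      (vM (var 0) (var 1) (var 3)))]

/-- `A₂₆`: functionality of the formula `G`:
`∀x,y,z₁,z₂ (G(x,y,z₁) & G(x,y,z₂) → E(z₁,z₂))`. Here `G = G(x,y,z)` has distinguished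
free variables `0,1,2` playing the role of `x,y,z`. -/
def A26 (G : PFml) : PFml :=
  alls [0,1,2,3] ((G.and (G.msub (sub1 2 (.var 3)))).imp (vE (.var 2) (.var 3)))

/-- `H(y,x)`, i.e. `∃w(Z(w) & G(y,x,w))`, expressing `{y}(x) = 0`; here `y,x` are the
variables `1,0` and `w` is the fresh variable `5`. -/
def Hfml (G : PFml) : PFml :=
  .ex 5 ((vZ (.var 5)).and (G.msub fun v =>
    if v = 0 then .var 1 else if v = 1 then .var 0 else if v = 2 then .var 5 else .var v))

/-- `B(v,x)` with `v,x` the variables `4,0`; here `B = B(v,x)` has distinguished free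
variables `0,1` playing the role of `v,x`. -/
def B40 (B : PFml) : PFml :=
  B.msub fun v => if v = 0 then .var 4 else if v = 1 then .var 0 else .var v

/-- `A₂₇`: `∀y,z ¬¬∃v ∀x (x ≤ z → (B(v,x) ↔ H(y,x)))`. -/
def A27 (G B : PFml) : PFml :=
  alls [1,2] (PFml.not (PFml.not (.ex 4 (.all 0
    ((leF 6 0 (.var 2)).imp ((B40 B).iff (Hfml G)))))))

/-- `A₂₈`: `∀x,y (B(x,y) ∨ ¬B(x,y))`. -/
def A28 (B : PFml) : PFml := alls [0,1] (B.or B.not)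

/-- `Q`: the conjunction of the formulas `A₁ – A₂₈`. -/
def Qfml (G B : PFml) : PFml := bigAnd (IRAstarAxioms ++ [A26 G, A27 G B, A28 B])

/-- The formula `[n](t)`: `[0](t) = Z(t)`, `[n+1](t) = ∃xₙ([n](xₙ) & S(xₙ,t))`. -/
def numFt : ℕ → PTerm → PFml
  | 0, t => vZ t
  | n + 1, t => .ex n ((numFt n (.var n)).and (vS (.var n) t))



/-- The axiom of equality for the predicate variable `Pⁿᵢ`:
`∀x⃗ ∀y⃗ (E(x₁,y₁) & … & E(xₙ,yₙ) → (P(x⃗) → P(y⃗)))`. -/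
def eqAx (n i : ℕ) : PFml :=
  alls ((List.range n) ++ (List.range n).map (· + n))
    ((bigAnd ((List.range n).map fun j => vE (.var j) (.var (n + j)))).imp
      ((PFml.atom i ((List.range n).map PTerm.var)).imp
        (PFml.atom i ((List.range n).map fun j => PTerm.var (n + j)))))




/-- Schemes over the arithmetical language: formulas of the language `LS*`, whose
atoms are either arithmetical atoms built from the predicate symbols `Z,E,S,A,M` of
`Ar`, or atoms built from the predicate variables `Pⁿᵢ`. -/
inductive Scheme : Type
  | bot
  | sZ (t : PTerm)
  | sE (t u : PTerm)
  | sS (t u : PTerm)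
  | sA (t u w : PTerm)
  | sM (t u w : PTerm)
  | patom (i : ℕ) (args : List PTerm)
  | and (φ ψ : Scheme)
  | or (φ ψ : Scheme)
  | imp (φ ψ : Scheme)
  | all (x : ℕ) (φ : Scheme)
  | ex (x : ℕ) (φ : Scheme)

def Scheme.not (φ : Scheme) : Scheme := φ.imp .bot
def Scheme.iff (φ ψ : Scheme) : Scheme := (φ.imp ψ).and (ψ.imp φ)

def Scheme.fv : Scheme → Finset ℕ
  | bot => ∅
  | sZ t => t.fv
  | sE t u => t.fv ∪ u.fv
  | sS t u => t.fv ∪ u.fv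
  | sA t u w => t.fv ∪ u.fv ∪ w.fv
  | sM t u w => t.fv ∪ u.fv ∪ w.fv
  | patom _ args => args.foldr (fun t s => t.fv ∪ s) ∅
  | and φ ψ => φ.fv ∪ ψ.fv
  | or φ ψ => φ.fv ∪ ψ.fv
  | imp φ ψ => φ.fv ∪ ψ.fv
  | all x φ => φ.fv.erase x
  | ex x φ => φ.fv.erase x

/-- All individual variables occurring in a scheme (free or bound). -/
def Scheme.vars : Scheme → Finset ℕ
  | bot => ∅
  | sZ t => t.fv
  | sE t u => t.fv ∪ u.fv
  | sS t u => t.fv ∪ u.fv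
  | sA t u w => t.fv ∪ u.fv ∪ w.fv
  | sM t u w => t.fv ∪ u.fv ∪ w.fv
  | patom _ args => args.foldr (fun t s => t.fv ∪ s) ∅
  | and φ ψ => φ.vars ∪ ψ.vars
  | or φ ψ => φ.vars ∪ ψ.vars
  | imp φ ψ => φ.vars ∪ ψ.vars
  | all x φ => insert x φ.vars
  | ex x φ => insert x φ.vars

def Scheme.bv : Scheme → Finset ℕ
  | and φ ψ => φ.bv ∪ ψ.bv
  | or φ ψ => φ.bv ∪ ψ.bv
  | imp φ ψ => φ.bv ∪ ψ.bv
  | all x φ => insert x φ.bv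
  | ex x φ => insert x φ.bv
  | _ => ∅

def Scheme.Closed (φ : Scheme) : Prop := φ.fv = ∅

/-- The predicate variables (arity, index) occurring in a scheme. -/
def Scheme.pvars : Scheme → Finset (ℕ × ℕ)
  | patom i args => {(args.length, i)}
  | and φ ψ => φ.pvars ∪ ψ.pvars
  | or φ ψ => φ.pvars ∪ ψ.pvars
  | imp φ ψ => φ.pvars ∪ ψ.pvars
  | all _ φ => φ.pvars
  | ex _ φ => φ.pvars
  | _ => ∅

def Scheme.msub (s : ℕ → PTerm) : Scheme → Scheme
  | bot => bot
  | sZ t => sZ (t.msub s)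
  | sE t u => sE (t.msub s) (u.msub s)
  | sS t u => sS (t.msub s) (u.msub s)
  | sA t u w => sA (t.msub s) (u.msub s) (w.msub s)
  | sM t u w => sM (t.msub s) (u.msub s) (w.msub s)
  | patom i args => patom i (args.map (PTerm.msub s))
  | and φ ψ => (φ.msub s).and (ψ.msub s)
  | or φ ψ => (φ.msub s).or (ψ.msub s)
  | imp φ ψ => (φ.msub s).imp (ψ.msub s)
  | all x φ => all x (φ.msub fun v => if v = x then .var x else s v)
  | ex x φ => ex x (φ.msub fun v => if v = x then .var x else s v)

def Scheme.FreeForM (s : ℕ → PTerm) : Scheme → Prop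
  | and φ ψ => φ.FreeForM s ∧ ψ.FreeForM s
  | or φ ψ => φ.FreeForM s ∧ ψ.FreeForM s
  | imp φ ψ => φ.FreeForM s ∧ ψ.FreeForM s
  | all x φ => (∀ v ∈ φ.fv, v ≠ x → x ∉ (s v).fv) ∧
      φ.FreeForM (fun v => if v = x then .var x else s v)
  | ex x φ => (∀ v ∈ φ.fv, v ≠ x → x ∉ (s v).fv) ∧
      φ.FreeForM (fun v => if v = x then .var x else s v)
  | _ => True

/-- Realizability of schemes: arithmetical atoms are realized by `e` iff `e = 0` and the
atom is true in the standard model; atoms of predicate variables are interpreted by `f`. -/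
def SReal (f : Interp) : (ℕ → ℕ) → ℕ → Scheme → Prop
  | _, _, .bot => False
  | ρ, e, .sZ t => e = 0 ∧ t.eval ρ = 0
  | ρ, e, .sE t u => e = 0 ∧ t.eval ρ = u.eval ρ
  | ρ, e, .sS t u => e = 0 ∧ t.eval ρ + 1 = u.eval ρ
  | ρ, e, .sA t u w => e = 0 ∧ t.eval ρ + u.eval ρ = w.eval ρ
  | ρ, e, .sM t u w => e = 0 ∧ t.eval ρ * u.eval ρ = w.eval ρ
  | ρ, e, .patom i args => e ∈ f args.length i (fun j => (args.get j).eval ρ)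
  | ρ, e, .and φ ψ => SReal f ρ (pexp 0 e) φ ∧ SReal f ρ (pexp 1 e) ψ
  | ρ, e, .or φ ψ => (pexp 0 e = 0 ∧ SReal f ρ (pexp 1 e) φ) ∨
      (pexp 0 e = 1 ∧ SReal f ρ (pexp 1 e) ψ)
  | ρ, e, .imp φ ψ => ∀ a, SReal f ρ a φ → ∃ b ∈ K e a, SReal f ρ b ψ
  | ρ, e, .all x φ => ∀ a, ∃ b ∈ K e a, SReal f (Function.update ρ x a) b φ
  | ρ, e, .ex x φ => SReal f (Function.update ρ x (pexp 0 e)) (pexp 1 e) φ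

/-- A closed scheme is uniformly absolutely realizable if a single `e` realizes it in
every interpretation. -/
def AbsRealizableS (φ : Scheme) : Prop := ∃ e, ∀ f : Interp, SReal f rho0 e φ

/-- Classical truth of a scheme with no predicate variables (arithmetical formula)
in the standard model. -/
def STrue : (ℕ → ℕ) → Scheme → Prop
  | _, .bot => False
  | ρ, .sZ t => t.eval ρ = 0
  | ρ, .sE t u => t.eval ρ = u.eval ρ
  | ρ, .sS t u => t.eval ρ + 1 = u.eval ρ
  | ρ, .sA t u w => t.eval ρ + u.eval ρ = w.eval ρ
  | ρ, .sM t u w => t.eval ρ * u.eval ρ = w.eval ρ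
  | _, .patom _ _ => False
  | ρ, .and φ ψ => STrue ρ φ ∧ STrue ρ ψ
  | ρ, .or φ ψ => STrue ρ φ ∨ STrue ρ ψ
  | ρ, .imp φ ψ => STrue ρ φ → STrue ρ ψ
  | ρ, .all x φ => ∀ a, STrue (Function.update ρ x a) φ
  | ρ, .ex x φ => ∃ a, STrue (Function.update ρ x a) φ

/-- `x ≤ t` in the scheme language: `∃z A(z,x,t)`. -/
def leS (z x : ℕ) (t : PTerm) : Scheme := .ex z (.sA (.var z) (.var x) t)

/-- `Δ₀`-formulas of `Ar` (as schemes). -/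
inductive IsDelta0S : Scheme → Prop
  | bot : IsDelta0S .bot
  | sZ (t) : IsDelta0S (.sZ t)
  | sE (t u) : IsDelta0S (.sE t u)
  | sS (t u) : IsDelta0S (.sS t u)
  | sA (t u w) : IsDelta0S (.sA t u w)
  | sM (t u w) : IsDelta0S (.sM t u w)
  | and {φ ψ} : IsDelta0S φ → IsDelta0S ψ → IsDelta0S (φ.and ψ)
  | or {φ ψ} : IsDelta0S φ → IsDelta0S ψ → IsDelta0S (φ.or ψ)
  | imp {φ ψ} : IsDelta0S φ → IsDelta0S ψ → IsDelta0S (φ.imp ψ)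
  | ball {x z : ℕ} {t : PTerm} {φ} : x ∉ t.fv → z ∉ t.fv → z ≠ x → IsDelta0S φ →
      IsDelta0S (.all x ((leS z x t).imp φ))
  | bex {x z : ℕ} {t : PTerm} {φ} : x ∉ t.fv → z ∉ t.fv → z ≠ x → IsDelta0S φ →
      IsDelta0S (.ex x ((leS z x t).and φ))

/-- `Σ`-formulas of `Ar` (as schemes). -/
inductive IsSigmaS : Scheme → Prop
  | delta0 {φ} : IsDelta0S φ → IsSigmaS φ
  | and {φ ψ} : IsSigmaS φ → IsSigmaS ψ → IsSigmaS (φ.and ψ)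
  | or {φ ψ} : IsSigmaS φ → IsSigmaS ψ → IsSigmaS (φ.or ψ)
  | ball {x z : ℕ} {t : PTerm} {φ} : x ∉ t.fv → z ∉ t.fv → z ≠ x → IsSigmaS φ →
      IsSigmaS (.all x ((leS z x t).imp φ))
  | bex {x z : ℕ} {t : PTerm} {φ} : x ∉ t.fv → z ∉ t.fv → z ≠ x → IsSigmaS φ →
      IsSigmaS (.ex x ((leS z x t).and φ))
  | ex {x : ℕ} {φ} : IsSigmaS φ → IsSigmaS (.ex x φ)

/-- `Φ[c]`: replace each atom `Pⁿᵢ(t₁,…,tₙ)` of a predicate variable by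
`Pⁿ⁺¹ᵢ(c,t₁,…,tₙ)` (arithmetical atoms are unchanged). -/
def Scheme.bracketC (c : ℕ) : Scheme → Scheme
  | patom i args => patom i (.const c :: args)
  | and φ ψ => (φ.bracketC c).and (ψ.bracketC c)
  | or φ ψ => (φ.bracketC c).or (ψ.bracketC c)
  | imp φ ψ => (φ.bracketC c).imp (ψ.bracketC c)
  | all x φ => all x (φ.bracketC c)
  | ex x φ => ex x (φ.bracketC c)
  | φ => φ

/-- `Φ[z]` for a variable `z`: replace each atom `Pⁿᵢ(t₁,…,tₙ)` of a predicate variable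
by `Pⁿ⁺¹ᵢ(z,t₁,…,tₙ)`. -/
def Scheme.bracketV (z : ℕ) : Scheme → Scheme
  | patom i args => patom i (.var z :: args)
  | and φ ψ => (φ.bracketV z).and (ψ.bracketV z)
  | or φ ψ => (φ.bracketV z).or (ψ.bracketV z)
  | imp φ ψ => (φ.bracketV z).imp (ψ.bracketV z)
  | all x φ => all x (φ.bracketV z)
  | ex x φ => ex x (φ.bracketV z)
  | φ => φ

/-- The interpretation `f_c`: `f_c(Pⁿᵢ)(k₁,…,kₙ) = f(Pⁿ⁺¹ᵢ)(c,k₁,…,kₙ)`. -/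
def interpCons (c : ℕ) (f : Interp) : Interp := fun n i v => f (n + 1) i (Fin.cons c v)

/-- Does the predicate variable `Pⁿᵢ` occur in the scheme? -/
def Scheme.occursP (n i : ℕ) : Scheme → Prop
  | patom j args => j = i ∧ args.length = n
  | and φ ψ => φ.occursP n i ∨ ψ.occursP n i
  | or φ ψ => φ.occursP n i ∨ ψ.occursP n i
  | imp φ ψ => φ.occursP n i ∨ ψ.occursP n i
  | all _ φ => φ.occursP n i
  | ex _ φ => φ.occursP n i
  | _ => False

/-- The substitution of the terms `args` for the distinguished variables `x₁,…,xₙ`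
(named `0,…,n-1`). -/
def argSub (args : List PTerm) : ℕ → PTerm :=
  fun v => if h : v < args.length then args.get ⟨v, h⟩ else .var v

/-- Substitution of schemes for predicate variables: each atom `Pⁿᵢ(t₁,…,tₙ)` is
replaced by the result of simultaneously substituting `t₁,…,tₙ` for the distinguished
variables `0,…,n-1` of the scheme `σ n i`. -/
def Scheme.substP (σ : ℕ → ℕ → Scheme) : Scheme → Scheme
  | patom i args => (σ args.length i).msub (argSub args)
  | and φ ψ => (φ.substP σ).and (ψ.substP σ)
  | or φ ψ => (φ.substP σ).or (ψ.substP σ)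
  | imp φ ψ => (φ.substP σ).imp (ψ.substP σ)
  | all x φ => all x (φ.substP σ)
  | ex x φ => ex x (φ.substP σ)
  | φ => φ

/-- The list of schemes `σ` is acceptable for substitution in the given scheme:
(1) at every atom of a predicate variable the substitution of the argument terms
for the distinguished variables is capture-free, and (2) no atom of a predicate
variable lies in the scope of a quantifier binding a "superfluous" parameter of the
scheme substituted for that variable. -/
def Scheme.Acceptable (σ : ℕ → ℕ → Scheme) : Scheme → Prop
  | patom i args => (σ args.length i).FreeForM (argSub args)
  | and φ ψ => φ.Acceptable σ ∧ ψ.Acceptable σ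
  | or φ ψ => φ.Acceptable σ ∧ ψ.Acceptable σ
  | imp φ ψ => φ.Acceptable σ ∧ ψ.Acceptable σ
  | all x φ => (∀ n i, φ.occursP n i → x ∉ (σ n i).fv \ Finset.range n) ∧ φ.Acceptable σ
  | ex x φ => (∀ n i, φ.occursP n i → x ∉ (σ n i).fv \ Finset.range n) ∧ φ.Acceptable σ
  | _ => True

/-- The universal closure of a scheme. -/
def Scheme.univClosure (φ : Scheme) : Scheme :=
  (φ.fv.sort (· ≤ ·)).foldr Scheme.all φ




/-- Natural deduction for the intuitionistic predicate calculus `IQC` in the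
language `L*`. -/
inductive IQC : List PFml → PFml → Prop
  | hyp {Γ : List PFml} {φ : PFml} : φ ∈ Γ → IQC Γ φ
  | botE {Γ φ} : IQC Γ .bot → IQC Γ φ
  | andI {Γ : List PFml} {φ ψ : PFml} : IQC Γ φ → IQC Γ ψ → IQC Γ (φ.and ψ)
  | andE1 {Γ : List PFml} {φ ψ : PFml} : IQC Γ (φ.and ψ) → IQC Γ φ
  | andE2 {Γ : List PFml} {φ ψ : PFml} : IQC Γ (φ.and ψ) → IQC Γ ψ
  | orI1 {Γ : List PFml} {φ ψ : PFml} : IQC Γ φ → IQC Γ (φ.or ψ)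
  | orI2 {Γ : List PFml} {φ ψ : PFml} : IQC Γ ψ → IQC Γ (φ.or ψ)
  | orE {Γ φ ψ χ} : IQC Γ (φ.or ψ) → IQC (φ :: Γ) χ → IQC (ψ :: Γ) χ → IQC Γ χ
  | impI {Γ : List PFml} {φ ψ : PFml} : IQC (φ :: Γ) ψ → IQC Γ (φ.imp ψ)
  | impE {Γ : List PFml} {φ ψ : PFml} : IQC Γ (φ.imp ψ) → IQC Γ φ → IQC Γ ψ
  | allI {Γ x φ} : IQC Γ φ → (∀ ψ ∈ Γ, x ∉ ψ.fv) → IQC Γ (.all x φ)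
  | allE {Γ x φ} (t : PTerm) : IQC Γ (.all x φ) → φ.FreeForM (sub1 x t) →
      IQC Γ (φ.msub (sub1 x t))
  | exI {Γ x φ} (t : PTerm) : IQC Γ (φ.msub (sub1 x t)) → φ.FreeForM (sub1 x t) →
      IQC Γ (.ex x φ)
  | exE {Γ x φ χ} : IQC Γ (.ex x φ) → IQC (φ :: Γ) χ → x ∉ χ.fv →
      (∀ ψ ∈ Γ, x ∉ ψ.fv) → IQC Γ χ

/-- `Pⁿᵢ` occurs in the formula. -/
def PFml.occursP (n i : ℕ) : PFml → Prop
  | .atom j args => j = i ∧ args.length = n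
  | .and φ ψ => φ.occursP n i ∨ ψ.occursP n i
  | .or φ ψ => φ.occursP n i ∨ ψ.occursP n i
  | .imp φ ψ => φ.occursP n i ∨ ψ.occursP n i
  | .all _ φ => φ.occursP n i
  | .ex _ φ => φ.occursP n i
  | _ => False



/-- Substitution of formulas for predicate variables. -/
def PFml.substP (σ : ℕ → ℕ → PFml) : PFml → PFml
  | .atom i args => (σ args.length i).msub (argSub args)
  | .and φ ψ => (φ.substP σ).and (ψ.substP σ)
  | .or φ ψ => (φ.substP σ).or (ψ.substP σ)
  | .imp φ ψ => (φ.substP σ).imp (ψ.substP σ)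
  | .all x φ => .all x (φ.substP σ)
  | .ex x φ => .ex x (φ.substP σ)
  | .bot => .bot

def PFml.AcceptableP (σ : ℕ → ℕ → PFml) : PFml → Prop
  | .atom i args => (σ args.length i).FreeForM (argSub args)
  | .and φ ψ => φ.AcceptableP σ ∧ ψ.AcceptableP σ
  | .or φ ψ => φ.AcceptableP σ ∧ ψ.AcceptableP σ
  | .imp φ ψ => φ.AcceptableP σ ∧ ψ.AcceptableP σ
  | .all x φ => (∀ n i, φ.occursP n i → x ∉ (σ n i).fv \ Finset.range n) ∧ φ.AcceptableP σ
  | .ex x φ => (∀ n i, φ.occursP n i → x ∉ (σ n i).fv \ Finset.range n) ∧ φ.AcceptableP σ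
  | .bot => True

/-- `φ` is a substitutional instance of the predicate formula `base`. -/
def IsInstance (base φ : PFml) : Prop :=
  ∃ σ : ℕ → ℕ → PFml, base.AcceptableP σ ∧ φ = base.substP σ



inductive LATerm : Type
  | var (v : ℕ)
  | zero
  | succ (t : LATerm)
  | add (t u : LATerm)
  | mul (t u : LATerm)

def LATerm.eval (ρ : ℕ → ℕ) : LATerm → ℕ
  | var v => ρ v
  | zero => 0
  | succ t => t.eval ρ + 1
  | add t u => t.eval ρ + u.eval ρ
  | mul t u => t.eval ρ * u.eval ρ

def LATerm.fv : LATerm → Finset ℕ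
  | var v => {v}
  | zero => ∅
  | succ t => t.fv
  | add t u => t.fv ∪ u.fv
  | mul t u => t.fv ∪ u.fv

def LATerm.msub (s : ℕ → LATerm) : LATerm → LATerm
  | var v => s v
  | zero => zero
  | succ t => succ (t.msub s)
  | add t u => add (t.msub s) (u.msub s)
  | mul t u => mul (t.msub s) (u.msub s)

/-- The numeral for `n`. -/
def numeral : ℕ → LATerm
  | 0 => .zero
  | n + 1 => .succ (numeral n)

inductive LAFml : Type
  | eq (t u : LATerm)
  | and (φ ψ : LAFml)
  | or (φ ψ : LAFml)
  | imp (φ ψ : LAFml)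
  | not (φ : LAFml)
  | all (x : ℕ) (φ : LAFml)
  | ex (x : ℕ) (φ : LAFml)

def LAFml.fv : LAFml → Finset ℕ
  | eq t u => t.fv ∪ u.fv
  | and φ ψ => φ.fv ∪ ψ.fv
  | or φ ψ => φ.fv ∪ ψ.fv
  | imp φ ψ => φ.fv ∪ ψ.fv
  | not φ => φ.fv
  | all x φ => φ.fv.erase x
  | ex x φ => φ.fv.erase x

def LAFml.msub (s : ℕ → LATerm) : LAFml → LAFml
  | eq t u => eq (t.msub s) (u.msub s)
  | and φ ψ => (φ.msub s).and (ψ.msub s)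
  | or φ ψ => (φ.msub s).or (ψ.msub s)
  | imp φ ψ => (φ.msub s).imp (ψ.msub s)
  | not φ => (φ.msub s).not
  | all x φ => all x (φ.msub fun v => if v = x then .var x else s v)
  | ex x φ => ex x (φ.msub fun v => if v = x then .var x else s v)

def sub1LA (x : ℕ) (t : LATerm) : ℕ → LATerm := fun v => if v = x then t else .var v

def LAFml.FreeForM (s : ℕ → LATerm) : LAFml → Prop
  | and φ ψ => φ.FreeForM s ∧ ψ.FreeForM s
  | or φ ψ => φ.FreeForM s ∧ ψ.FreeForM s
  | imp φ ψ => φ.FreeForM s ∧ ψ.FreeForM s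
  | not φ => φ.FreeForM s
  | all x φ => (∀ v ∈ φ.fv, v ≠ x → x ∉ (s v).fv) ∧
      φ.FreeForM (fun v => if v = x then .var x else s v)
  | ex x φ => (∀ v ∈ φ.fv, v ≠ x → x ∉ (s v).fv) ∧
      φ.FreeForM (fun v => if v = x then .var x else s v)
  | _ => True

/-- Classical truth of an `LA`-formula in the standard model. -/
def LATrue : (ℕ → ℕ) → LAFml → Prop
  | ρ, .eq t u => t.eval ρ = u.eval ρ
  | ρ, .and φ ψ => LATrue ρ φ ∧ LATrue ρ ψ
  | ρ, .or φ ψ => LATrue ρ φ ∨ LATrue ρ ψ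
  | ρ, .imp φ ψ => LATrue ρ φ → LATrue ρ ψ
  | ρ, .not φ => ¬ LATrue ρ φ
  | ρ, .all x φ => ∀ a, LATrue (Function.update ρ x a) φ
  | ρ, .ex x φ => ∃ a, LATrue (Function.update ρ x a) φ


/-- Kleene's recursive realizability for `LA`-formulas. -/
def LAReal : (ℕ → ℕ) → ℕ → LAFml → Prop
  | ρ, e, .eq t u => e = 0 ∧ t.eval ρ = u.eval ρ
  | ρ, e, .and φ ψ => LAReal ρ (pexp 0 e) φ ∧ LAReal ρ (pexp 1 e) ψ
  | ρ, e, .or φ ψ => (pexp 0 e = 0 ∧ LAReal ρ (pexp 1 e) φ) ∨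
      (pexp 0 e = 1 ∧ LAReal ρ (pexp 1 e) ψ)
  | ρ, e, .imp φ ψ => ∀ a, LAReal ρ a φ → ∃ b ∈ K e a, LAReal ρ b ψ
  | ρ, _, .not φ => ∀ a, ¬ LAReal ρ a φ
  | ρ, e, .all x φ => ∀ a, ∃ b ∈ K e a, LAReal (Function.update ρ x a) b φ
  | ρ, e, .ex x φ => LAReal (Function.update ρ x (pexp 0 e)) (pexp 1 e) φ

/-- `t₁ ≤ t₂` in `LA`: `∃v (t₁ + v = t₂)`. -/
def leLA (x v : ℕ) (t : LATerm) : LAFml := .ex v (.eq (.add (.var x) (.var v)) t)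

inductive IsDelta0LA : LAFml → Prop
  | eq (t u) : IsDelta0LA (.eq t u)
  | and {φ ψ} : IsDelta0LA φ → IsDelta0LA ψ → IsDelta0LA (φ.and ψ)
  | or {φ ψ} : IsDelta0LA φ → IsDelta0LA ψ → IsDelta0LA (φ.or ψ)
  | imp {φ ψ} : IsDelta0LA φ → IsDelta0LA ψ → IsDelta0LA (φ.imp ψ)
  | not {φ} : IsDelta0LA φ → IsDelta0LA φ.not
  | ball {x v : ℕ} {t : LATerm} {φ} : x ∉ t.fv → v ∉ t.fv → v ≠ x → IsDelta0LA φ →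
      IsDelta0LA (.all x ((leLA x v t).imp φ))
  | bex {x v : ℕ} {t : LATerm} {φ} : x ∉ t.fv → v ∉ t.fv → v ≠ x → IsDelta0LA φ →
      IsDelta0LA (.ex x ((leLA x v t).and φ))

inductive IsSigmaLA : LAFml → Prop
  | delta0 {φ} : IsDelta0LA φ → IsSigmaLA φ
  | and {φ ψ} : IsSigmaLA φ → IsSigmaLA ψ → IsSigmaLA (φ.and ψ)
  | or {φ ψ} : IsSigmaLA φ → IsSigmaLA ψ → IsSigmaLA (φ.or ψ)
  | ball {x v : ℕ} {t : LATerm} {φ} : x ∉ t.fv → v ∉ t.fv → v ≠ x → IsSigmaLA φ →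
      IsSigmaLA (.all x ((leLA x v t).imp φ))
  | bex {x v : ℕ} {t : LATerm} {φ} : x ∉ t.fv → v ∉ t.fv → v ≠ x → IsSigmaLA φ →
      IsSigmaLA (.ex x ((leLA x v t).and φ))
  | ex {x : ℕ} {φ} : IsSigmaLA φ → IsSigmaLA (.ex x φ)

/-- Natural deduction over `LA` from a set `Ax` of non-logical axioms
(intuitionistic logic). -/
inductive LD (Ax : LAFml → Prop) : List LAFml → LAFml → Prop
  | ax {Γ φ} : Ax φ → LD Ax Γ φ
  | hyp {Γ φ} : φ ∈ Γ → LD Ax Γ φ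
  | andI {Γ : List LAFml} {φ ψ : LAFml} : LD Ax Γ φ → LD Ax Γ ψ → LD Ax Γ (φ.and ψ)
  | andE1 {Γ : List LAFml} {φ ψ : LAFml} : LD Ax Γ (φ.and ψ) → LD Ax Γ φ
  | andE2 {Γ : List LAFml} {φ ψ : LAFml} : LD Ax Γ (φ.and ψ) → LD Ax Γ ψ
  | orI1 {Γ : List LAFml} {φ ψ : LAFml} : LD Ax Γ φ → LD Ax Γ (φ.or ψ)
  | orI2 {Γ : List LAFml} {φ ψ : LAFml} : LD Ax Γ ψ → LD Ax Γ (φ.or ψ)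
  | orE {Γ φ ψ χ} : LD Ax Γ (φ.or ψ) → LD Ax (φ :: Γ) χ → LD Ax (ψ :: Γ) χ → LD Ax Γ χ
  | impI {Γ : List LAFml} {φ ψ : LAFml} : LD Ax (φ :: Γ) ψ → LD Ax Γ (φ.imp ψ)
  | impE {Γ : List LAFml} {φ ψ : LAFml} : LD Ax Γ (φ.imp ψ) → LD Ax Γ φ → LD Ax Γ ψ
  | notI {Γ : List LAFml} {φ ψ : LAFml} : LD Ax (φ :: Γ) ψ → LD Ax (φ :: Γ) ψ.not → LD Ax Γ φ.not
  | notE {Γ : List LAFml} {φ ψ : LAFml} : LD Ax Γ φ → LD Ax Γ φ.not → LD Ax Γ ψ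
  | allI {Γ x φ} : LD Ax Γ φ → (∀ ψ ∈ Γ, x ∉ ψ.fv) → LD Ax Γ (.all x φ)
  | allE {Γ x φ} (t : LATerm) : LD Ax Γ (.all x φ) → φ.FreeForM (sub1LA x t) →
      LD Ax Γ (φ.msub (sub1LA x t))
  | exI {Γ x φ} (t : LATerm) : LD Ax Γ (φ.msub (sub1LA x t)) → φ.FreeForM (sub1LA x t) →
      LD Ax Γ (.ex x φ)
  | exE {Γ x φ χ} : LD Ax Γ (.ex x φ) → LD Ax (φ :: Γ) χ → x ∉ χ.fv →
      (∀ ψ ∈ Γ, x ∉ ψ.fv) → LD Ax Γ χ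

open LATerm (var) in
/-- The axioms of equality and the Peano axioms for successor, sum and product
(without induction). -/
def baseAxioms : List LAFml := [
  .all 0 (.eq (var 0) (var 0)),
  .all 0 (.all 1 (.all 2 ((LAFml.eq (var 0) (var 1)).imp
    ((LAFml.eq (var 0) (var 2)).imp (.eq (var 1) (var 2)))))),
  .all 0 (.all 1 ((LAFml.eq (var 0) (var 1)).imp (.eq (.succ (var 0)) (.succ (var 1))))),
  .all 0 (.all 1 ((LAFml.eq (.succ (var 0)) (.succ (var 1))).imp (.eq (var 0) (var 1)))),
  .all 0 (LAFml.not (.eq (.succ (var 0)) .zero)),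
  .all 0 (.all 1 (.all 2 ((LAFml.eq (var 0) (var 1)).imp
    (.eq (.add (var 0) (var 2)) (.add (var 1) (var 2)))))),
  .all 0 (.all 1 (.all 2 ((LAFml.eq (var 0) (var 1)).imp
    (.eq (.add (var 2) (var 0)) (.add (var 2) (var 1)))))),
  .all 0 (.all 1 (.all 2 ((LAFml.eq (var 0) (var 1)).imp
    (.eq (.mul (var 0) (var 2)) (.mul (var 1) (var 2)))))),
  .all 0 (.all 1 (.all 2 ((LAFml.eq (var 0) (var 1)).imp
    (.eq (.mul (var 2) (var 0)) (.mul (var 2) (var 1)))))),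
  .all 0 (.eq (.add (var 0) .zero) (var 0)),
  .all 0 (.all 1 (.eq (.add (var 0) (.succ (var 1))) (.succ (.add (var 0) (var 1))))),
  .all 0 (.eq (.mul (var 0) .zero) .zero),
  .all 0 (.all 1 (.eq (.mul (var 0) (.succ (var 1)))
    (.add (.mul (var 0) (var 1)) (var 0))))]

/-- The axioms of intuitionistic Robinson arithmetic `IRA`: the Peano axioms with the
induction scheme replaced by `∀x (x = 0 ∨ ∃y (x = sy))`. -/
def IRAax (φ : LAFml) : Prop :=
  φ ∈ baseAxioms ∨
    φ = .all 0 ((LAFml.eq (.var 0) .zero).or (.ex 1 (.eq (.var 0) (.succ (.var 1)))))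

/-- An instance of the induction scheme. -/
def indInst (x : ℕ) (φ : LAFml) : LAFml :=
  ((φ.msub (sub1LA x .zero)).and
    (.all x (φ.imp (φ.msub (sub1LA x (.succ (.var x))))))).imp (.all x φ)

/-- The axioms of Heyting arithmetic `HA`. -/
def HAax (ψ : LAFml) : Prop := ψ ∈ baseAxioms ∨ ∃ x φ, ψ = indInst x φ




/-- Translation of schemes into pure predicate formulas: the arithmetical predicate
symbols `Z,E,S,A,M` become the predicate variables `P¹₀,P²₀,P²₁,P³₀,P³₁`, and the other
predicate variables are renamed injectively so as to avoid these five. -/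
def Scheme.toPFml : Scheme → PFml
  | .bot => .bot
  | .sZ t => vZ t
  | .sE t u => vE t u
  | .sS t u => vS t u
  | .sA t u w => vA t u w
  | .sM t u w => vM t u w
  | .patom i args => .atom (i + 2) args
  | .and φ ψ => φ.toPFml.and ψ.toPFml
  | .or φ ψ => φ.toPFml.or ψ.toPFml
  | .imp φ ψ => φ.toPFml.imp ψ.toPFml
  | .all x φ => .all x φ.toPFml
  | .ex x φ => .ex x φ.toPFml

/-- `Eq(E,P₁,…,Pₘ)`: the conjunction of the axioms of equality for the predicate
variables of the scheme `Φ` (as renamed by `Scheme.toPFml`). -/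
noncomputable def EqFor (Φ : Scheme) : PFml :=
  bigAnd (Φ.pvars.toList.map fun p => eqAx p.1 (p.2 + 2))

/-- `Φ*`: the pure predicate formula
`Q(Z,E,S,A,M) & Eq(E,P₁,…,Pₘ) → Φ(Z,E,S,A,M,P₁,…,Pₘ)` associated with a scheme `Φ`. -/
noncomputable def SchemeStar (G B : PFml) (Φ : Scheme) : PFml :=
  ((Qfml G B).and (EqFor Φ)).imp Φ.toPFml

/-- The Markov principle `M` as a pure predicate formula, with `P` the unary
predicate variable `P¹₁`. -/
def Mfml : PFml :=
  ((PFml.all 0 ((PFml.atom 1 [.var 0]).or (PFml.atom 1 [.var 0]).not)).and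
    (PFml.ex 0 (PFml.atom 1 [.var 0])).not.not).imp (PFml.ex 0 (PFml.atom 1 [.var 0]))

/-- `G(z,x,y)` where `z,x,y` are the variables `2,0,1` and the distinguished variables
`0,1,2` of `G` play the role of `x,y,z` in `G(x,y,z)` (expressing `{x}(y)=z`). -/
def Gzxy (G : PFml) : PFml :=
  G.msub fun v => if v = 0 then .var 2 else if v = 1 then .var 0 else
    if v = 2 then .var 1 else .var v

/-- The scheme `nCT` as a pure predicate formula: `P` is the predicate variable `P¹₁`
and `Q'` is `P²₂`. -/
def nCTfml (G : PFml) : PFml :=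
  (PFml.all 0 ((PFml.atom 1 [.var 0]).not.imp
      (PFml.ex 1 (PFml.atom 2 [.var 0, .var 1])))).imp
    (PFml.ex 2 (PFml.all 0 ((PFml.atom 1 [.var 0]).not.imp
      (PFml.ex 1 ((Gzxy G).and (PFml.atom 2 [.var 0, .var 1]))))))

/-- The pure predicate formula `nCT*`, i.e. `Q & Eq(E,P,Q') → nCT`. -/
def nCTstar (G B : PFml) : PFml :=
  ((Qfml G B).and ((eqAx 1 1).and (eqAx 2 2))).imp (nCTfml G)

/-- The calculus `MQC`: intuitionistic predicate calculus together with all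
substitutional instances of the Markov principle `M` and of the formula `nCT*`
as axioms. -/
inductive MQC (G B : PFml) : List PFml → PFml → Prop
  | axM {Γ : List PFml} {φ : PFml} : IsInstance Mfml φ → MQC G B Γ φ
  | axCT {Γ : List PFml} {φ : PFml} : IsInstance (nCTstar G B) φ → MQC G B Γ φ
  | hyp {Γ : List PFml} {φ : PFml} : φ ∈ Γ → MQC G B Γ φ
  | botE {Γ φ} : MQC G B Γ .bot → MQC G B Γ φ
  | andI {Γ : List PFml} {φ ψ : PFml} : MQC G B Γ φ → MQC G B Γ ψ → MQC G B Γ (φ.and ψ)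
  | andE1 {Γ : List PFml} {φ ψ : PFml} : MQC G B Γ (φ.and ψ) → MQC G B Γ φ
  | andE2 {Γ : List PFml} {φ ψ : PFml} : MQC G B Γ (φ.and ψ) → MQC G B Γ ψ
  | orI1 {Γ : List PFml} {φ ψ : PFml} : MQC G B Γ φ → MQC G B Γ (φ.or ψ)
  | orI2 {Γ : List PFml} {φ ψ : PFml} : MQC G B Γ ψ → MQC G B Γ (φ.or ψ)
  | orE {Γ : List PFml} {φ ψ χ : PFml} : MQC G B Γ (φ.or ψ) → MQC G B (φ :: Γ) χ →
      MQC G B (ψ :: Γ) χ → MQC G B Γ χ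
  | impI {Γ : List PFml} {φ ψ : PFml} : MQC G B (φ :: Γ) ψ → MQC G B Γ (φ.imp ψ)
  | impE {Γ : List PFml} {φ ψ : PFml} : MQC G B Γ (φ.imp ψ) → MQC G B Γ φ → MQC G B Γ ψ
  | allI {Γ x φ} : MQC G B Γ φ → (∀ ψ ∈ Γ, x ∉ ψ.fv) → MQC G B Γ (.all x φ)
  | allE {Γ x φ} (t : PTerm) : MQC G B Γ (.all x φ) → φ.FreeForM (sub1 x t) →
      MQC G B Γ (φ.msub (sub1 x t))
  | exI {Γ x φ} (t : PTerm) : MQC G B Γ (φ.msub (sub1 x t)) → φ.FreeForM (sub1 x t) →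
      MQC G B Γ (.ex x φ)
  | exE {Γ x φ χ} : MQC G B Γ (.ex x φ) → MQC G B (φ :: Γ) χ → x ∉ χ.fv →
      (∀ ψ ∈ Γ, x ∉ ψ.fv) → MQC G B Γ χ

/-- The classical predicate calculus `CQC`: intuitionistic predicate calculus together
with the law of the excluded middle. -/
inductive CQC : List PFml → PFml → Prop
  | em {Γ : List PFml} (φ : PFml) : CQC Γ (φ.or φ.not)
  | hyp {Γ : List PFml} {φ : PFml} : φ ∈ Γ → CQC Γ φ
  | botE {Γ φ} : CQC Γ .bot → CQC Γ φ
  | andI {Γ : List PFml} {φ ψ : PFml} : CQC Γ φ → CQC Γ ψ → CQC Γ (φ.and ψ)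
  | andE1 {Γ : List PFml} {φ ψ : PFml} : CQC Γ (φ.and ψ) → CQC Γ φ
  | andE2 {Γ : List PFml} {φ ψ : PFml} : CQC Γ (φ.and ψ) → CQC Γ ψ
  | orI1 {Γ : List PFml} {φ ψ : PFml} : CQC Γ φ → CQC Γ (φ.or ψ)
  | orI2 {Γ : List PFml} {φ ψ : PFml} : CQC Γ ψ → CQC Γ (φ.or ψ)
  | orE {Γ : List PFml} {φ ψ χ : PFml} : CQC Γ (φ.or ψ) → CQC (φ :: Γ) χ →
      CQC (ψ :: Γ) χ → CQC Γ χ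
  | impI {Γ : List PFml} {φ ψ : PFml} : CQC (φ :: Γ) ψ → CQC Γ (φ.imp ψ)
  | impE {Γ : List PFml} {φ ψ : PFml} : CQC Γ (φ.imp ψ) → CQC Γ φ → CQC Γ ψ
  | allI {Γ x φ} : CQC Γ φ → (∀ ψ ∈ Γ, x ∉ ψ.fv) → CQC Γ (.all x φ)
  | allE {Γ x φ} (t : PTerm) : CQC Γ (.all x φ) → φ.FreeForM (sub1 x t) →
      CQC Γ (φ.msub (sub1 x t))
  | exI {Γ x φ} (t : PTerm) : CQC Γ (φ.msub (sub1 x t)) → φ.FreeForM (sub1 x t) →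
      CQC Γ (.ex x φ)
  | exE {Γ x φ χ} : CQC Γ (.ex x φ) → CQC (φ :: Γ) χ → x ∉ χ.fv →
      (∀ ψ ∈ Γ, x ∉ ψ.fv) → CQC Γ χ

/-- Auxiliary translation for the predicate form: the formula expressing that the
`LA`-term `t` has value `v`; `k` is a supply of fresh variables, and the next unused
fresh variable is returned. -/
def LATerm.pf : LATerm → ℕ → ℕ → PFml × ℕ
  | .var u, v, k => (vE (.var u) (.var v), k)
  | .zero, v, k => (vZ (.var v), k)
  | .succ t, v, k =>
      let r := t.pf k (k + 1)
      (.ex k (r.1.and (vS (.var k) (.var v))), r.2)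
  | .add t u, v, k =>
      let r1 := t.pf k (k + 2)
      let r2 := u.pf (k + 1) r1.2
      (.ex k (.ex (k + 1) (r1.1.and (r2.1.and (vA (.var k) (.var (k + 1)) (.var v))))), r2.2)
  | .mul t u, v, k =>
      let r1 := t.pf k (k + 2)
      let r2 := u.pf (k + 1) r1.2
      (.ex k (.ex (k + 1) (r1.1.and (r2.1.and (vM (.var k) (.var (k + 1)) (.var v))))), r2.2)

/-- Auxiliary translation for the predicate form of an `LA`-formula;
`k` is a supply of fresh variables. -/
def LAFml.pf : LAFml → ℕ → PFml
  | .eq t u, k =>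
      let r1 := t.pf k (k + 2)
      let r2 := u.pf (k + 1) r1.2
      .ex k (.ex (k + 1) (r1.1.and (r2.1.and (vE (.var k) (.var (k + 1))))))
  | .and φ ψ, k => (φ.pf k).and (ψ.pf k)
  | .or φ ψ, k => (φ.pf k).or (ψ.pf k)
  | .imp φ ψ, k => (φ.pf k).imp (ψ.pf k)
  | .not φ, k => (φ.pf k).not
  | .all x φ, k => .all x (φ.pf k)
  | .ex x φ, k => .ex x (φ.pf k)

def LATerm.vmax : LATerm → ℕ
  | .var v => v + 1
  | .zero => 0
  | .succ t => t.vmax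
  | .add t u => max t.vmax u.vmax
  | .mul t u => max t.vmax u.vmax

def LAFml.vmax : LAFml → ℕ
  | .eq t u => max t.vmax u.vmax
  | .and φ ψ => max φ.vmax ψ.vmax
  | .or φ ψ => max φ.vmax ψ.vmax
  | .imp φ ψ => max φ.vmax ψ.vmax
  | .not φ => φ.vmax
  | .all x φ => max (x + 1) φ.vmax
  | .ex x φ => max (x + 1) φ.vmax

/-- The predicate form of an `LA`-formula: the result of eliminating the function
symbols `0, s, +, ·` and replacing `=` by the predicate symbol `E`. -/
def predForm (φ : LAFml) : PFml := φ.pf φ.vmax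

/-- Translation of `L*`-terms into `LA`-terms (constants become numerals). -/
def PTerm.toLA : PTerm → LATerm
  | .var v => .var v
  | .const c => numeral c

/-- Substitution of arithmetical formulas for the predicate variables of a predicate
formula: the atom `Pⁿᵢ(t₁,…,tₙ)` is replaced by the result of substituting `t₁,…,tₙ`
for the distinguished variables `0,…,n-1` of the `LA`-formula `σ n i`. -/
def PFml.toLA (σ : ℕ → ℕ → LAFml) : PFml → LAFml
  | .bot => .eq .zero (.succ .zero)
  | .atom i args => (σ args.length i).msub
      (fun v => if h : v < args.length then (args.get ⟨v, h⟩).toLA else .var v)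
  | .and φ ψ => (φ.toLA σ).and (ψ.toLA σ)
  | .or φ ψ => (φ.toLA σ).or (ψ.toLA σ)
  | .imp φ ψ => (φ.toLA σ).imp (ψ.toLA σ)
  | .all x φ => .all x (φ.toLA σ)
  | .ex x φ => .ex x (φ.toLA σ)

/-- Acceptability of the arithmetical substitution `σ` for a predicate formula. -/
def PFml.AcceptLA (σ : ℕ → ℕ → LAFml) : PFml → Prop
  | .atom i args => (σ args.length i).FreeForM
      (fun v => if h : v < args.length then (args.get ⟨v, h⟩).toLA else .var v)
  | .and φ ψ => φ.AcceptLA σ ∧ ψ.AcceptLA σ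
  | .or φ ψ => φ.AcceptLA σ ∧ ψ.AcceptLA σ
  | .imp φ ψ => φ.AcceptLA σ ∧ ψ.AcceptLA σ
  | .all x φ => (∀ n i, φ.occursP n i → x ∉ (σ n i).fv \ Finset.range n) ∧ φ.AcceptLA σ
  | .ex x φ => (∀ n i, φ.occursP n i → x ∉ (σ n i).fv \ Finset.range n) ∧ φ.AcceptLA σ
  | .bot => True

/-- The standard arithmetical reading of the predicate symbols `Z,E,S,A,M`. -/
def arithSig : ℕ → ℕ → LAFml
  | 1, 0 => .eq (.var 0) .zero
  | 2, 0 => .eq (.var 0) (.var 1)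
  | 2, 1 => .eq (.succ (.var 0)) (.var 1)
  | 3, 0 => .eq (.add (.var 0) (.var 1)) (.var 2)
  | 3, 1 => .eq (.mul (.var 0) (.var 1)) (.var 2)
  | _, _ => .eq .zero (.succ .zero)

/-- An instance of the Markov scheme `M` in the language `LA`. -/
def MinstLA (x : ℕ) (φ : LAFml) : LAFml :=
  ((LAFml.all x (φ.or φ.not)).and (LAFml.ex x φ).not.not).imp (.ex x φ)

/-- An instance of the scheme `nCT` in the language `LA` (with `x,y,e` the variables
`0,1,2`): `∀x(¬Ψ(x) → ∃y Φ(x,y)) → ∃e ∀x(¬Ψ(x) → ∃y(G(e,x,y) & Φ(x,y)))`. -/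
def nCTinstLA (GLA Ψ Φ : LAFml) : LAFml :=
  (LAFml.all 0 (Ψ.not.imp (.ex 1 Φ))).imp
    (.ex 2 (.all 0 (Ψ.not.imp (.ex 1 ((GLA.msub fun v =>
      if v = 0 then .var 2 else if v = 1 then .var 0 else
        if v = 2 then .var 1 else .var v).and Φ)))))

/-- The axioms of Markov arithmetic `MA = HA + M + nCT`. -/
def MAax (GLA : LAFml) (ψ : LAFml) : Prop :=
  HAax ψ ∨ (∃ x φ, ψ = MinstLA x φ) ∨
    (∃ Ψ Φ : LAFml, 1 ∉ Ψ.fv ∧ 2 ∉ Ψ.fv ∧ 2 ∉ Φ.fv ∧ ψ = nCTinstLA GLA Ψ Φ)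

/-- The axioms of the theory `CA`: the Peano axioms (those of `HA`) together with all
arithmetical substitutional instances of the predicate formulas `M` and `nCT*`. -/
def CAax (G B : PFml) (ψ : LAFml) : Prop :=
  HAax ψ ∨ (∃ σ, Mfml.AcceptLA σ ∧ ψ = Mfml.toLA σ) ∨
    (∃ σ, (nCTstar G B).AcceptLA σ ∧ ψ = (nCTstar G B).toLA σ)


/-- The interpretation `f` is a model of the closed formula `Φ` if `Φ` is
`f`-realizable. -/
def IsModel (f : Interp) (φ : PFml) : Prop := ∃ e, Realizes f rho0 e φ

/-- A natural number `a` is `f`-standard if the formula `[n](a)` is `f`-realizable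
for some `n`. -/
def fStandard (f : Interp) (a : ℕ) : Prop :=
  ∃ n e, Realizes f rho0 e (numFt n (.const a))

/-- The scheme `nCT` (with `P` the unary predicate variable `P¹₀` and `Q'` the binary
predicate variable `P²₀`, and `x,y,z` the variables `0,1,2`):
`∀x(¬P(x) → ∃y Q'(x,y)) → ∃z ∀x (¬P(x) → ∃y (G(z,x,y) & Q'(x,y)))`. -/
def nCTscheme (GS : Scheme) : Scheme :=
  (Scheme.all 0 ((Scheme.patom 0 [.var 0]).not.imp
      (.ex 1 (.patom 0 [.var 0, .var 1])))).imp
    (.ex 2 (.all 0 ((Scheme.patom 0 [.var 0]).not.imp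
      (.ex 1 ((GS.msub fun v => if v = 0 then .var 2 else if v = 1 then .var 0 else
          if v = 2 then .var 1 else .var v).and (.patom 0 [.var 0, .var 1]))))))

/-- The arithmetical formula `Φ(x) = ∃y (Z(y) & G(x,x,y))` (with `x,y` the
variables `0,1`), expressing `{x}(x) = 0`. -/
def PhiX (G : PFml) : PFml :=
  .ex 1 ((vZ (.var 1)).and (G.msub fun v =>
    if v = 0 then .var 0 else if v = 1 then .var 0 else
      if v = 2 then .var 1 else .var v))

/-- The predicate formula `Ψ* = (Q → Ψ)` where `Ψ = ¬∀x(¬Φ(x) ∨ Φ(x))` and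
`Φ(x) = ∃y(Z(y) & G(x,x,y))`. -/
def PsiStar (G B : PFml) : PFml :=
  (Qfml G B).imp (PFml.not (.all 0 (((PhiX G).not).or (PhiX G))))

end Cpc

/-!
The schemes `Ψᵢ` turn an interpretation `f` into another one: read `Pᵢ(a₁,…,aₙ)` as the set of
`f`-realizers of `Ψᵢ(a₁,…,aₙ)`, with the superfluous parameters of `Ψᵢ` fixed to the values given by
a valuation `ρ`. Acceptability makes the realizers of `Φ(Ψ₁,…,Ψₙ)` under `f` and `ρ` exactly those
of `Φ` in the new interpretation, so an absolute realizer of `Φ` realizes the instance whatever `f`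
and `ρ` are. The universal quantifiers of the closure are then realized by constant functions.
-/

namespace Cpc

theorem apply_get_map {α β γ : Type*} (F : (n : ℕ) → (Fin n → β) → γ) (g : α → β) (l : List α) :
    F (l.map g).length (l.map g).get = F l.length (fun j => g (l.get j)) := by
  have hlen : (l.map g).length = l.length := l.length_map g
  have hget : (l.map g).get ≍ fun j => g (l.get j) :=
    (Fin.heq_fun_iff hlen).2 fun j => by simp
  congr 1

namespace PTerm

theorem mem_foldr_fv {args : List PTerm} {v : ℕ} :
    v ∈ args.foldr (fun t s => t.fv ∪ s) ∅ ↔ ∃ t ∈ args, v ∈ t.fv := by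
  induction args with
  | nil => simp
  | cons t args ih => simp [ih]

theorem eval_msub {t : PTerm} {s : ℕ → PTerm} {ρ ρ' : ℕ → ℕ}
    (hs : ∀ v ∈ t.fv, (s v).eval ρ = ρ' v) : (t.msub s).eval ρ = t.eval ρ' := by
  cases t with
  | var v => exact hs v (Finset.mem_singleton_self v)
  | const c => rfl

theorem msub_var (t : PTerm) : t.msub var = t := by
  cases t <;> rfl

theorem ite_var_eq_var (x : ℕ) : (fun v => if v = x then var x else var v) = var := by
  funext v
  split_ifs with hvx
  · rw [hvx]
  · rfl

theorem eval_update_of_notMem {t : PTerm} {x : ℕ} (hx : x ∉ t.fv) (ρ : ℕ → ℕ) (a : ℕ) :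
    t.eval (Function.update ρ x a) = t.eval ρ := by
  cases t with
  | var v => exact Function.update_of_ne (fun hvx : v = x => hx (by simp [fv, hvx])) a ρ
  | const c => rfl

theorem eval_ite_update {A : Finset ℕ} {s : ℕ → PTerm} {x : ℕ} {ρ ρ' : ℕ → ℕ}
    (hs : ∀ v ∈ A.erase x, (s v).eval ρ = ρ' v) (hfree : ∀ v ∈ A, v ≠ x → x ∉ (s v).fv) (a : ℕ) :
    ∀ v ∈ A, (if v = x then var x else s v).eval (Function.update ρ x a) =
      Function.update ρ' x a v := by
  intro v hv
  by_cases hvx : v = x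
  · simp [hvx, eval]
  · rw [if_neg hvx, eval_update_of_notMem (hfree v hv hvx), Function.update_of_ne hvx]
    exact hs v (Finset.mem_erase.2 ⟨hvx, hv⟩)

end PTerm

namespace Scheme

theorem msub_var (φ : Scheme) : φ.msub .var = φ := by
  induction φ with
  | patom i args => simp [msub, funext PTerm.msub_var]
  | _ => simp_all only [msub, PTerm.msub_var, PTerm.ite_var_eq_var]

theorem freeForM_var (φ : Scheme) : φ.FreeForM .var := by
  induction φ with
  | all x φ ih | ex x φ ih =>
    refine ⟨fun v _ hvx => ?_, (PTerm.ite_var_eq_var x).symm ▸ ih⟩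
    simpa [PTerm.fv] using Ne.symm hvx
  | _ => simp_all only [FreeForM, and_self]

end Scheme

variable {f : Interp} {φ : Scheme} {σ : ℕ → ℕ → Scheme} {ρ ρ' τ : ℕ → ℕ} {e : ℕ}

-- Comparing with an arbitrary `ρ'` that is prescribed on `φ.fv` only, rather than with
-- `fun v => (s v).eval ρ`, is what lets the induction pass under a quantifier.
theorem sReal_msub {s : ℕ → PTerm} (hfree : φ.FreeForM s)
    (hs : ∀ v ∈ φ.fv, (s v).eval ρ = ρ' v) :
    SReal f ρ e (φ.msub s) ↔ SReal f ρ' e φ := by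
  induction φ generalizing s ρ ρ' e with
  | bot => rfl
  | sZ t => simp only [Scheme.msub, SReal, PTerm.eval_msub hs]
  | sE t u | sS t u =>
    obtain ⟨ht, hu⟩ := Finset.forall_mem_union.1 hs
    simp only [Scheme.msub, SReal, PTerm.eval_msub ht, PTerm.eval_msub hu]
  | sA t u w | sM t u w =>
    obtain ⟨htu, hw⟩ := Finset.forall_mem_union.1 hs
    obtain ⟨ht, hu⟩ := Finset.forall_mem_union.1 htu
    simp only [Scheme.msub, SReal, PTerm.eval_msub ht, PTerm.eval_msub hu, PTerm.eval_msub hw]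
  | patom i args =>
    have heval (j : Fin args.length) : ((args.get j).msub s).eval ρ = (args.get j).eval ρ' :=
      PTerm.eval_msub fun v hv => hs v (PTerm.mem_foldr_fv.2 ⟨_, args.get_mem j, hv⟩)
    simp only [Scheme.msub, SReal]
    rw [apply_get_map (fun n v => f n i fun j => (v j).eval ρ) (PTerm.msub s) args]
    simp only [heval]
  | and φ ψ ihφ ihψ | or φ ψ ihφ ihψ | imp φ ψ ihφ ihψ =>
    obtain ⟨hφ, hψ⟩ := Finset.forall_mem_union.1 hs
    simp only [Scheme.msub, SReal, ihφ hfree.1 hφ, ihψ hfree.2 hψ]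
  | all x φ ih | ex x φ ih =>
    simp only [Scheme.msub, SReal, ih hfree.2 (PTerm.eval_ite_update hs hfree.1 _)]

theorem sReal_congr (h : ∀ v ∈ φ.fv, ρ v = ρ' v) : SReal f ρ e φ ↔ SReal f ρ' e φ := by
  simpa only [φ.msub_var] using sReal_msub (f := f) (e := e) φ.freeForM_var h

theorem sReal_iff_of_closed (hφ : φ.Closed) (ρ ρ' : ℕ → ℕ) :
    SReal f ρ e φ ↔ SReal f ρ' e φ :=
  sReal_congr fun v hv => absurd (hφ ▸ hv) (Finset.notMem_empty v)

/-- The interpretation reading `Pⁿᵢ(a₁,…,aₙ)` as the set of `f`-realizers of the scheme `σ n i` with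
its distinguished variables `0,…,n-1` set to `a₁,…,aₙ`; the other free variables of `σ n i` are
parameters, and take their values from `τ`. -/
def substInterp (f : Interp) (σ : ℕ → ℕ → Scheme) (τ : ℕ → ℕ) : Interp := fun n i v =>
  {e | SReal f (fun k => if hk : k < n then v ⟨k, hk⟩ else τ k) e (σ n i)}

theorem eval_argSub (args : List PTerm) (ρ : ℕ → ℕ) (v : ℕ) :
    (argSub args v).eval ρ =
      if hv : v < args.length then (args.get ⟨v, hv⟩).eval ρ else ρ v := by
  unfold argSub
  split_ifs <;> rfl

/-- The valuations `ρ` and `τ` give the same values to the parameters of the schemes that `σ`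
substitutes for the predicate variables of `φ`. -/
def ParamsAgree (σ : ℕ → ℕ → Scheme) (φ : Scheme) (ρ τ : ℕ → ℕ) : Prop :=
  ∀ n i, φ.occursP n i → ∀ v ∈ (σ n i).fv \ Finset.range n, ρ v = τ v

theorem ParamsAgree.update {x : ℕ} (h : ParamsAgree σ φ ρ τ)
    (hx : ∀ n i, φ.occursP n i → x ∉ (σ n i).fv \ Finset.range n) (a : ℕ) :
    ParamsAgree σ φ (Function.update ρ x a) τ := by
  intro n i hocc v hv
  have hvx : v ≠ x := fun hvx => hx n i hocc (hvx ▸ hv)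
  rw [Function.update_of_ne hvx, h n i hocc v hv]

theorem sReal_substP_of_paramsAgree (hacc : φ.Acceptable σ) (hτ : ParamsAgree σ φ ρ τ) :
    SReal f ρ e (φ.substP σ) ↔ SReal (substInterp f σ τ) ρ e φ := by
  induction φ generalizing ρ e with
  | bot | sZ | sE | sS | sA | sM => rfl
  | patom i args =>
    refine sReal_msub hacc fun v hv => ?_
    rw [eval_argSub]
    split_ifs with hlt
    · rfl
    · exact hτ args.length i ⟨rfl, rfl⟩ v (by simpa [hv] using hlt)
  | and φ ψ ihφ ihψ | or φ ψ ihφ ihψ | imp φ ψ ihφ ihψ =>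
    have hφ : ParamsAgree σ φ ρ τ := fun n i hocc => hτ n i (.inl hocc)
    have hψ : ParamsAgree σ ψ ρ τ := fun n i hocc => hτ n i (.inr hocc)
    simp only [Scheme.substP, SReal, ihφ hacc.1 hφ, ihψ hacc.2 hψ]
  | all x φ ih | ex x φ ih =>
    have hφ : ParamsAgree σ φ ρ τ := hτ
    simp only [Scheme.substP, SReal, ih hacc.2 (hφ.update hacc.1 _)]

theorem sReal_substP (hacc : φ.Acceptable σ) :
    SReal f ρ e (φ.substP σ) ↔ SReal (substInterp f σ ρ) ρ e φ :=
  sReal_substP_of_paramsAgree hacc fun _ _ _ _ _ => rfl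

/-- A Gödel number of the constant function with value `e`; it realizes `∀x Φ` whenever `e`
realizes `Φ` for every value of `x`. -/
def constIndex (e : ℕ) : ℕ := Encodable.encode (Nat.Partrec.Code.const e)

theorem K_constIndex (e a : ℕ) : K (constIndex e) a = Part.some e := by
  simp [K, constIndex]

theorem sReal_foldr_all (h : ∀ ρ, SReal f ρ e φ) (xs : List ℕ) (ρ : ℕ → ℕ) :
    SReal f ρ (constIndex^[xs.length] e) (xs.foldr Scheme.all φ) := by
  induction xs generalizing ρ with
  | nil => exact h ρ
  | cons x xs ih =>
    rw [List.length_cons, Function.iterate_succ_apply', List.foldr_cons]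
    exact fun a => ⟨_, by simp [K_constIndex], ih _⟩

theorem sReal_univClosure (h : ∀ ρ, SReal f ρ e φ) (ρ : ℕ → ℕ) :
    SReal f ρ (constIndex^[φ.fv.card] e) φ.univClosure := by
  simpa only [Scheme.univClosure, Finset.length_sort] using sReal_foldr_all h (φ.fv.sort (· ≤ ·)) ρ

end Cpc

/-- if a closed scheme `Φ(P₁,…,Pₙ)` is absolutely realizable then for any
list of schemes acceptable for substitution in it, the universal closure of the
substitutional instance is absolutely realizable. -/
theorem substitution_preserves_absolute_realizability (Φ : Cpc.Scheme)
    (hcl : Φ.Closed) (σ : ℕ → ℕ → Cpc.Scheme) (hacc : Φ.Acceptable σ)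
    (h : ∃ e, ∀ f : Cpc.Interp, Cpc.SReal f Cpc.rho0 e Φ) :
    ∃ e, ∀ f : Cpc.Interp,
      Cpc.SReal f Cpc.rho0 e (Cpc.Scheme.univClosure (Φ.substP σ)) := by
  obtain ⟨e, he⟩ := h
  have hinst (f : Cpc.Interp) (ρ : ℕ → ℕ) : Cpc.SReal f ρ e (Φ.substP σ) := by
    rw [Cpc.sReal_substP hacc, Cpc.sReal_iff_of_closed hcl ρ Cpc.rho0]
    exact he (Cpc.substInterp f σ ρ)
  exact ⟨_, fun f => Cpc.sReal_univClosure (hinst f) Cpc.rho0⟩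
end

section
/- The closed arithmetical formula Q (the conjunction of the formulas A₁–A₂₈) is realizable under Kleene recursive realizability. -/
/-!
Every axiom `A₁ – A₂₈` is true in the standard model, so it suffices that realizability of `Q`
coincides with its truth. Call a formula self-realizing if realizability implies truth and, when the
formula is true, a realizer can be computed from the values of the variables. Self-realizing
formulas are closed under `∧` and `∀`, under `∨` and `∃` when the truth of the parts is `Σ₁` (an
unbounded search finds a true disjunct or a witness), and under implications whose premise merely
is realizable exactly when it is true. Hence all `Σ`-formulas are self-realizing, and so are the
axioms: the double negation in `A₂₇` hides an existential quantifier whose witness need not be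
computed, and the disjunction in `A₂₈` is decided because `g` is primitive recursive.
-/

namespace Cpc

/-! ### Coding of pairs and the s-m-n theorem -/

/-- The code `2 ^ a * 3 ^ b` of the pair `(a, b)`, with projections `pexp 0` and `pexp 1`. -/
def primePair (a b : ℕ) : ℕ := 2 ^ a * 3 ^ b

theorem factorization_primePair (a b : ℕ) :
    (primePair a b).factorization = Finsupp.single 2 a + Finsupp.single 3 b := by
  rw [primePair, Nat.factorization_mul (by positivity) (by positivity),
    Nat.prime_two.factorization_pow, Nat.prime_three.factorization_pow]

theorem pexp_zero_primePair (a b : ℕ) : pexp 0 (primePair a b) = a := by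
  simp [pexp, Nat.nth_prime_zero_eq_two, factorization_primePair]

theorem pexp_one_primePair (a b : ℕ) : pexp 1 (primePair a b) = b := by
  simp [pexp, Nat.nth_prime_one_eq_three, factorization_primePair]

theorem primrec₂_primePair : Primrec₂ primePair :=
  have primrec₂_pow : Primrec₂ ((· ^ ·) : ℕ → ℕ → ℕ) := Primrec₂.unpaired'.1 Nat.Primrec.pow
  Primrec.nat_mul.comp (primrec₂_pow.comp (Primrec.const 2) Primrec.fst)
    (primrec₂_pow.comp (Primrec.const 3) Primrec.snd)

theorem partrec_map_primePair {α : Type*} [Primcodable α] {f : α × ℕ →. ℕ} (hf : Partrec f) :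
    Partrec fun b => (f b).map (primePair b.2) :=
  hf.map (primrec₂_primePair.comp (Primrec.snd.comp Primrec.fst) Primrec.snd).to_comp

theorem exists_computable_index {α : Type*} [Primcodable α] {f : α × ℕ →. ℕ} (hf : Partrec f) :
    ∃ c : α → ℕ, Computable c ∧ ∀ a x, K (c a) x = f (a, x) := by
  obtain ⟨code, hcode⟩ := Nat.Partrec.Code.exists_code.1 hf
  refine ⟨fun a => Encodable.encode (code.curry (Encodable.encode a)), ?_, fun a x => ?_⟩
  · exact (Primrec.encode.comp (Nat.Partrec.Code.primrec₂_curry.comp (Primrec.const code)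
      Primrec.encode)).to_comp
  · have hpair : Nat.pair (Encodable.encode a) x = Encodable.encode (a, x) := by simp
    rw [K, Denumerable.ofNat_encode, Nat.Partrec.Code.eval_curry, hcode, hpair]
    simp [Encodable.encodek, Part.map_id']

/-! ### Bounded quantifiers and Σ₁ predicates -/

section SigmaOnePred

variable {α β : Type*} [Primcodable α] [Primcodable β]

theorem primrecPred_forall_le {p : α × ℕ → Prop} (hp : PrimrecPred p) {t : α → ℕ}
    (ht : Primrec t) : PrimrecPred fun a => ∀ x ≤ t a, p (a, x) :=
  have hp' : PrimrecRel fun x a => p (a, x) := hp.comp (Primrec.snd.pair Primrec.fst)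
  (hp'.forall_mem_list.comp (Primrec.list_range.comp (Primrec.succ.comp ht)) Primrec.id).of_eq
    fun a => by simp

theorem primrecPred_exists_le {p : α × ℕ → Prop} (hp : PrimrecPred p) {t : α → ℕ}
    (ht : Primrec t) : PrimrecPred fun a => ∃ x ≤ t a, p (a, x) :=
  have hp' : PrimrecRel fun x a => p (a, x) := hp.comp (Primrec.snd.pair Primrec.fst)
  (hp'.exists_mem_list.comp (Primrec.list_range.comp (Primrec.succ.comp ht)) Primrec.id).of_eq
    fun a => by simp

/-- A predicate is `Σ₁` if it is the projection of a primitive recursive relation. -/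
def SigmaOnePred (p : α → Prop) : Prop :=
  ∃ D : α → ℕ → Prop, PrimrecRel D ∧ ∀ a, p a ↔ ∃ n, D a n

namespace SigmaOnePred

theorem of_primrecPred {p : α → Prop} (hp : PrimrecPred p) : SigmaOnePred p :=
  ⟨fun a _ => p a, hp.comp Primrec.fst, fun _ => by simp⟩

theorem comp {p : α → Prop} (hp : SigmaOnePred p) {f : β → α} (hf : Primrec f) :
    SigmaOnePred fun b => p (f b) := by
  obtain ⟨D, hD, hpD⟩ := hp
  exact ⟨fun b n => D (f b) n, hD.comp (hf.comp Primrec.fst) Primrec.snd, fun b => hpD (f b)⟩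

theorem or {p q : α → Prop} (hp : SigmaOnePred p) (hq : SigmaOnePred q) :
    SigmaOnePred fun a => p a ∨ q a := by
  obtain ⟨D, hD, hpD⟩ := hp
  obtain ⟨E, hE, hqE⟩ := hq
  exact ⟨fun a n => D a n ∨ E a n, PrimrecPred.or hD hE,
    fun a => by simp only [hpD, hqE, exists_or]⟩

theorem and {p q : α → Prop} (hp : SigmaOnePred p) (hq : SigmaOnePred q) :
    SigmaOnePred fun a => p a ∧ q a := by
  obtain ⟨D, hD, hpD⟩ := hp
  obtain ⟨E, hE, hqE⟩ := hq
  refine ⟨fun a n => D a n.unpair.1 ∧ E a n.unpair.2, ?_, fun a => ?_⟩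
  · exact PrimrecPred.and
      (hD.comp Primrec.fst (Primrec.fst.comp (Primrec.unpair.comp Primrec.snd)))
      (hE.comp Primrec.fst (Primrec.snd.comp (Primrec.unpair.comp Primrec.snd)))
  · simp only [hpD, hqE]
    constructor
    · rintro ⟨⟨m, hm⟩, n, hn⟩
      exact ⟨Nat.pair m n, by simpa using ⟨hm, hn⟩⟩
    · rintro ⟨n, hm, hn⟩
      exact ⟨⟨_, hm⟩, _, hn⟩

theorem exists_nat {p : α × ℕ → Prop} (hp : SigmaOnePred p) :
    SigmaOnePred fun a => ∃ n, p (a, n) := by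
  obtain ⟨D, hD, hpD⟩ := hp
  refine ⟨fun a n => D (a, n.unpair.1) n.unpair.2, ?_, fun a => ?_⟩
  · exact hD.comp (Primrec.fst.pair (Primrec.fst.comp (Primrec.unpair.comp Primrec.snd)))
      (Primrec.snd.comp (Primrec.unpair.comp Primrec.snd))
  · simp only [hpD]
    constructor
    · rintro ⟨m, n, h⟩
      exact ⟨Nat.pair m n, by simpa using h⟩
    · rintro ⟨n, h⟩
      exact ⟨_, _, h⟩

theorem forall_le {p : α × ℕ → Prop} (hp : SigmaOnePred p) {t : α → ℕ} (ht : Primrec t) :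
    SigmaOnePred fun a => ∀ x ≤ t a, p (a, x) := by
  obtain ⟨D, hD, hpD⟩ := hp
  refine ⟨fun a n => ∀ x ≤ t a, ∃ m ≤ n, D (a, x) m, ?_, fun a => ?_⟩
  · have hD' : PrimrecPred fun c : ((α × ℕ) × ℕ) × ℕ => D (c.1.1.1, c.1.2) c.2 :=
      hD.comp ((Primrec.fst.comp (Primrec.fst.comp Primrec.fst)).pair
        (Primrec.snd.comp Primrec.fst)) Primrec.snd
    exact primrecPred_forall_le (primrecPred_exists_le hD' (Primrec.snd.comp Primrec.fst))
      (ht.comp Primrec.fst)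
  · simp only [hpD]
    constructor
    · intro h
      choose! f hf using h
      exact ⟨(Finset.range (t a + 1)).sup f, fun x hx =>
        ⟨f x, Finset.le_sup (f := f) (Finset.mem_range_succ_iff.2 hx), hf x hx⟩⟩
    · rintro ⟨n, h⟩ x hx
      obtain ⟨m, -, hm⟩ := h x hx
      exact ⟨m, hm⟩

theorem exists_partrec_choice {p : α × ℕ → Prop} (hp : SigmaOnePred p) :
    ∃ S : α →. ℕ, Partrec S ∧ ∀ a, (∃ n, p (a, n)) → ∃ n ∈ S a, p (a, n) := by
  classical
  obtain ⟨D, hD, hpD⟩ := hp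
  let E : α → ℕ → Bool := fun a k => decide (D (a, k.unpair.1) k.unpair.2)
  have hE : Primrec₂ E := PrimrecRel.decide (hD.comp
    (Primrec.fst.pair (Primrec.fst.comp (Primrec.unpair.comp Primrec.snd)))
    (Primrec.snd.comp (Primrec.unpair.comp Primrec.snd)))
  refine ⟨fun a => (Nat.rfind fun k => Part.some (E a k)).map fun k => k.unpair.1, ?_, ?_⟩
  · exact (Partrec.rfind (p := fun a k => Part.some (E a k)) hE.to_comp).map
      (Primrec.fst.comp (Primrec.unpair.comp Primrec.snd)).to_comp
  · rintro a ⟨n, hn⟩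
    obtain ⟨m, hm⟩ := (hpD _).1 hn
    obtain ⟨k, hk, -⟩ := Nat.rfind_min' (p := E a) (m := Nat.pair n m) (by simpa [E] using hm)
    have hEk : D (a, k.unpair.1) k.unpair.2 := by simpa [E] using Nat.rfind_spec hk
    exact ⟨k.unpair.1, Part.mem_map _ hk, (hpD _).2 ⟨_, hEk⟩⟩

end SigmaOnePred

end SigmaOnePred

/-! ### Substitution -/

section Substitution

theorem PTerm.eval_update_of_notMem_fv {t : PTerm} {x : ℕ} (hx : x ∉ t.fv) (ρ : ℕ → ℕ) (a : ℕ) :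
    t.eval (Function.update ρ x a) = t.eval ρ := by
  cases t with
  | var v =>
    have hvx : v ≠ x := fun h => hx (Finset.mem_singleton.2 h.symm)
    exact Function.update_of_ne hvx a ρ
  | const c => rfl

variable {s : ℕ → PTerm} {ρ ρ' : ℕ → ℕ}

theorem PTerm.eval_msub_s9 {t : PTerm} (h : ∀ v ∈ t.fv, (s v).eval ρ = ρ' v) :
    (t.msub s).eval ρ = t.eval ρ' := by
  cases t with
  | var v => exact h v (by simp [PTerm.fv])
  | const c => rfl

theorem PTerm.fv_subset_fv_atom {t : PTerm} {args : List PTerm} (i : ℕ) (ht : t ∈ args) :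
    t.fv ⊆ (PFml.atom i args).fv := by
  induction args with
  | nil => simp at ht
  | cons u args ih =>
    rcases List.mem_cons.1 ht with rfl | ht
    · exact Finset.subset_union_left
    · exact (ih ht).trans Finset.subset_union_right

theorem apply_eval_map_msub {β : Type*} (F : (n : ℕ) → (Fin n → ℕ) → β) {args : List PTerm}
    (h : ∀ t ∈ args, (t.msub s).eval ρ = t.eval ρ') :
    F (args.map (PTerm.msub s)).length (fun j => ((args.map (PTerm.msub s)).get j).eval ρ) =
      F args.length fun j => (args.get j).eval ρ' := by
  have hlen : (args.map (PTerm.msub s)).length = args.length := List.length_map _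
  congr 1
  refine (Fin.heq_fun_iff hlen).2 fun j => ?_
  simpa using h _ (List.getElem_mem (hlen ▸ j.2))

theorem eval_update_of_forall_mem_erase {S : Finset ℕ} {x : ℕ}
    (hx : ∀ v ∈ S, v ≠ x → x ∉ (s v).fv) (h : ∀ v ∈ S.erase x, (s v).eval ρ = ρ' v) (a : ℕ) :
    ∀ v ∈ S, (if v = x then PTerm.var x else s v).eval (Function.update ρ x a) =
      Function.update ρ' x a v := by
  intro v hv
  by_cases hvx : v = x
  · simp [hvx, PTerm.eval]
  · rw [if_neg hvx, Function.update_of_ne hvx, PTerm.eval_update_of_notMem_fv (hx v hv hvx),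
      h v (Finset.mem_erase.2 ⟨hvx, hv⟩)]

theorem realizes_msub (f : Interp) {φ : PFml} (hφ : φ.FreeForM s)
    (h : ∀ v ∈ φ.fv, (s v).eval ρ = ρ' v) (e : ℕ) :
    Realizes f ρ e (φ.msub s) ↔ Realizes f ρ' e φ := by
  induction φ generalizing s ρ ρ' e with
  | bot => rfl
  | atom i args =>
    exact iff_of_eq (apply_eval_map_msub (fun n v => e ∈ f n i v) fun t ht =>
      PTerm.eval_msub_s9 fun v hv => h v (PTerm.fv_subset_fv_atom i ht hv))
  | and φ ψ ihφ ihψ | or φ ψ ihφ ihψ | imp φ ψ ihφ ihψ =>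
    simp only [PFml.fv, Finset.mem_union] at h
    simp only [PFml.msub, Realizes, ihφ hφ.1 fun v hv => h v (.inl hv),
      ihψ hφ.2 fun v hv => h v (.inr hv)]
  | all x φ ih | ex x φ ih =>
    simp only [PFml.msub, Realizes, fun a => ih hφ.2 (eval_update_of_forall_mem_erase hφ.1 h a)]

theorem trueStd_msub {φ : PFml} (hφ : φ.FreeForM s) (h : ∀ v ∈ φ.fv, (s v).eval ρ = ρ' v) :
    TrueStd ρ (φ.msub s) ↔ TrueStd ρ' φ := by
  induction φ generalizing s ρ ρ' with
  | bot => rfl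
  | atom i args =>
    exact iff_of_eq (apply_eval_map_msub (fun n v => arithStd n i v) fun t ht =>
      PTerm.eval_msub_s9 fun v hv => h v (PTerm.fv_subset_fv_atom i ht hv))
  | and φ ψ ihφ ihψ | or φ ψ ihφ ihψ | imp φ ψ ihφ ihψ =>
    simp only [PFml.fv, Finset.mem_union] at h
    simp only [PFml.msub, TrueStd, ihφ hφ.1 fun v hv => h v (.inl hv),
      ihψ hφ.2 fun v hv => h v (.inr hv)]
  | all x φ ih | ex x φ ih =>
    simp only [PFml.msub, TrueStd, fun a => ih hφ.2 (eval_update_of_forall_mem_erase hφ.1 h a)]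

theorem PFml.freeForM_of_bv {φ : PFml} (h : ∀ u ∈ φ.fv, ∀ v ∈ φ.bv, v ≠ u → v ∉ (s u).fv) :
    φ.FreeForM s := by
  induction φ generalizing s with
  | bot | atom => trivial
  | and φ ψ ihφ ihψ | or φ ψ ihφ ihψ | imp φ ψ ihφ ihψ =>
    simp only [PFml.fv, PFml.bv, Finset.mem_union] at h
    exact ⟨ihφ fun u hu v hv => h u (.inl hu) v (.inl hv),
      ihψ fun u hu v hv => h u (.inr hu) v (.inr hv)⟩
  | all x φ ih | ex x φ ih =>
    simp only [PFml.fv, PFml.bv, Finset.mem_insert, Finset.mem_erase] at h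
    refine ⟨fun u hu hux => h u ⟨hux, hu⟩ x (.inl rfl) hux.symm, ih fun u hu v hv hvu => ?_⟩
    split
    · next hux => simpa [PTerm.fv, ← hux] using hvu
    · next hux => exact h u ⟨hux, hu⟩ v (.inr hv) hvu

end Substitution

/-! ### Truth of bounded quantifiers -/

section Bounded

variable {x z : ℕ} {t : PTerm} {φ : PFml} {ρ : ℕ → ℕ}

theorem trueStd_leF (hz : z ∉ t.fv) (hzx : z ≠ x) :
    TrueStd ρ (leF z x t) ↔ ρ x ≤ t.eval ρ := by
  have hadd (c : ℕ) : TrueStd (Function.update ρ z c) (vA (.var z) (.var x) t) ↔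
      c + ρ x = t.eval ρ := by
    rw [← PTerm.eval_update_of_notMem_fv hz ρ c]
    simp [vA, TrueStd, arithStd, PTerm.eval, hzx.symm]
  simp only [leF, TrueStd, hadd]
  exact ⟨fun ⟨c, hc⟩ => hc ▸ Nat.le_add_left _ c, fun h => ⟨_, Nat.sub_add_cancel h⟩⟩

theorem trueStd_update_leF (hx : x ∉ t.fv) (hz : z ∉ t.fv) (hzx : z ≠ x) (a : ℕ) :
    TrueStd (Function.update ρ x a) (leF z x t) ↔ a ≤ t.eval ρ := by
  rw [trueStd_leF hz hzx, Function.update_self, PTerm.eval_update_of_notMem_fv hx]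

theorem trueStd_ball (hx : x ∉ t.fv) (hz : z ∉ t.fv) (hzx : z ≠ x) :
    TrueStd ρ (.all x ((leF z x t).imp φ)) ↔
      ∀ a ≤ t.eval ρ, TrueStd (Function.update ρ x a) φ := by
  simp only [TrueStd, trueStd_update_leF hx hz hzx]

theorem trueStd_bex (hx : x ∉ t.fv) (hz : z ∉ t.fv) (hzx : z ≠ x) :
    TrueStd ρ (.ex x ((leF z x t).and φ)) ↔
      ∃ a ≤ t.eval ρ, TrueStd (Function.update ρ x a) φ := by
  simp only [TrueStd, trueStd_update_leF hx hz hzx]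

end Bounded

/-! ### Complexity of truth -/

/-- A family of valuations, indexed by `a : α`, each of whose coordinates is primitive recursive
in `a`. -/
def PrimrecValuation {α : Type} [Primcodable α] (ρ : α → ℕ → ℕ) : Prop :=
  ∀ v, Primrec fun a => ρ a v

namespace PrimrecValuation

variable {α : Type} [Primcodable α] {ρ : α → ℕ → ℕ}

theorem eval_term (hρ : PrimrecValuation ρ) (t : PTerm) : Primrec fun a => t.eval (ρ a) := by
  cases t with
  | var v => exact hρ v
  | const c => exact Primrec.const c

theorem update (hρ : PrimrecValuation ρ) (x : ℕ) :
    PrimrecValuation fun b : α × ℕ => Function.update (ρ b.1) x b.2 := by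
  intro v
  by_cases hvx : v = x
  · simpa [hvx] using Primrec.snd
  · simpa [hvx] using (hρ v).comp Primrec.fst

end PrimrecValuation

/-- The standard truth of `φ` is primitive recursive, uniformly in the values of the variables. -/
def PrimrecTruth (φ : PFml) : Prop :=
  ∀ (α : Type) [Primcodable α] (ρ : α → ℕ → ℕ), PrimrecValuation ρ →
    PrimrecPred fun a => TrueStd (ρ a) φ

/-- The standard truth of `φ` is `Σ₁`, uniformly in the values of the variables. -/
def SigmaOneTruth (φ : PFml) : Prop :=
  ∀ (α : Type) [Primcodable α] (ρ : α → ℕ → ℕ), PrimrecValuation ρ →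
    SigmaOnePred fun a => TrueStd (ρ a) φ

theorem PrimrecTruth.atom {i : ℕ} {args : List PTerm} (h : arithSlot args.length i) :
    PrimrecTruth (.atom i args) := by
  intro α _ ρ hρ
  have hterm := hρ.eval_term
  obtain ⟨hlen, rfl⟩ | ⟨hlen, hi⟩ | ⟨hlen, hi⟩ := h
  · obtain ⟨t, rfl⟩ := List.length_eq_one_iff.1 hlen
    exact Primrec.eq.comp (hterm t) (Primrec.const 0)
  · obtain ⟨t, u, rfl⟩ := List.length_eq_two.1 hlen
    interval_cases i
    · exact Primrec.eq.comp (hterm t) (hterm u)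
    · exact Primrec.eq.comp (Primrec.succ.comp (hterm t)) (hterm u)
  · obtain ⟨t, u, w, rfl⟩ := List.length_eq_three.1 hlen
    interval_cases i
    · exact Primrec.eq.comp (Primrec.nat_add.comp (hterm t) (hterm u)) (hterm w)
    · exact Primrec.eq.comp (Primrec.nat_mul.comp (hterm t) (hterm u)) (hterm w)

theorem PrimrecTruth.not {φ : PFml} (hφ : PrimrecTruth φ) : PrimrecTruth φ.not :=
  fun α _ ρ hρ => (hφ α ρ hρ).not

theorem IsDelta0.primrecTruth {φ : PFml} (h : IsDelta0 φ) : PrimrecTruth φ := by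
  induction h with
  | bot => exact fun _ _ _ _ => ⟨fun _ => .isFalse id, Primrec.const false⟩
  | atom h => exact .atom h
  | and _ _ ihφ ihψ => exact fun α _ ρ hρ => (ihφ α ρ hρ).and (ihψ α ρ hρ)
  | or _ _ ihφ ihψ => exact fun α _ ρ hρ => (ihφ α ρ hρ).or (ihψ α ρ hρ)
  | imp _ _ ihφ ihψ =>
    exact fun α _ ρ hρ => ((ihφ α ρ hρ).not.or (ihψ α ρ hρ)).of_eq fun a => imp_iff_not_or.symm
  | ball hx hz hzx _ ih =>
    exact fun α _ ρ hρ => (primrecPred_forall_le (ih (α × ℕ) _ (hρ.update _))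
      (hρ.eval_term _)).of_eq fun a => (trueStd_ball hx hz hzx).symm
  | bex hx hz hzx _ ih =>
    exact fun α _ ρ hρ => (primrecPred_exists_le (ih (α × ℕ) _ (hρ.update _))
      (hρ.eval_term _)).of_eq fun a => (trueStd_bex hx hz hzx).symm

theorem PrimrecTruth.sigmaOneTruth {φ : PFml} (hφ : PrimrecTruth φ) : SigmaOneTruth φ :=
  fun α _ ρ hρ => .of_primrecPred (hφ α ρ hρ)

namespace SigmaOneTruth

variable {φ ψ : PFml}

theorem and (hφ : SigmaOneTruth φ) (hψ : SigmaOneTruth ψ) : SigmaOneTruth (φ.and ψ) :=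
  fun α _ ρ hρ => (hφ α ρ hρ).and (hψ α ρ hρ)

theorem or (hφ : SigmaOneTruth φ) (hψ : SigmaOneTruth ψ) : SigmaOneTruth (φ.or ψ) :=
  fun α _ ρ hρ => (hφ α ρ hρ).or (hψ α ρ hρ)

theorem ex (x : ℕ) (hφ : SigmaOneTruth φ) : SigmaOneTruth (.ex x φ) :=
  fun α _ _ hρ => (hφ (α × ℕ) _ (hρ.update x)).exists_nat

theorem leF (z x : ℕ) (t : PTerm) : SigmaOneTruth (leF z x t) :=
  .ex z (PrimrecTruth.atom (.inr (.inr ⟨rfl, zero_le_one⟩))).sigmaOneTruth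

theorem ball {x z : ℕ} {t : PTerm} (hx : x ∉ t.fv) (hz : z ∉ t.fv) (hzx : z ≠ x)
    (hφ : SigmaOneTruth φ) : SigmaOneTruth (.all x ((Cpc.leF z x t).imp φ)) := by
  intro α _ _ hρ
  simp only [trueStd_ball hx hz hzx]
  exact (hφ (α × ℕ) _ (hρ.update x)).forall_le (hρ.eval_term t)

theorem msub {s : ℕ → PTerm} (hs : φ.FreeForM s) (hφ : SigmaOneTruth φ) :
    SigmaOneTruth (φ.msub s) := by
  intro α _ ρ hρ
  simp only [fun a => trueStd_msub (ρ := ρ a) hs fun _ _ => rfl]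
  exact hφ α _ fun v => hρ.eval_term (s v)

end SigmaOneTruth

theorem IsSigma.sigmaOneTruth {φ : PFml} (h : IsSigma φ) : SigmaOneTruth φ := by
  induction h with
  | delta0 h => exact h.primrecTruth.sigmaOneTruth
  | and _ _ ihφ ihψ => exact ihφ.and ihψ
  | or _ _ ihφ ihψ => exact ihφ.or ihψ
  | ball hx hz hzx _ ih => exact ih.ball hx hz hzx
  | bex _ _ _ _ ih => exact ((SigmaOneTruth.leF _ _ _).and ih).ex _
  | ex _ ih => exact ih.ex _

/-! ### Self-realizing formulas -/

/-- Realizability and standard truth of `φ` coincide, with no uniformity required. -/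
def RealizableIffTrue (φ : PFml) : Prop :=
  ∀ ρ, (∃ e, Realizes stdInterp ρ e φ) ↔ TrueStd ρ φ

/-- A formula is self-realizing if its realizability implies its standard truth and, conversely,
a realizer can be computed from the values of the variables whenever the formula is true. -/
structure SelfRealizing (φ : PFml) : Prop where
  sound {ρ : ℕ → ℕ} {e : ℕ} : Realizes stdInterp ρ e φ → TrueStd ρ φ
  complete {α : Type} [Primcodable α] {ρ : α → ℕ → ℕ} : PrimrecValuation ρ →
    ∃ R : α →. ℕ, Partrec R ∧ ∀ a, TrueStd (ρ a) φ → ∃ e ∈ R a, Realizes stdInterp (ρ a) e φ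

theorem SelfRealizing.realizableIffTrue {φ : PFml} (hφ : SelfRealizing φ) :
    RealizableIffTrue φ := by
  refine fun ρ => ⟨fun ⟨e, he⟩ => hφ.sound he, fun hρ => ?_⟩
  obtain ⟨R, -, hR⟩ := hφ.complete (α := Unit) (ρ := fun _ => ρ) fun v => Primrec.const (ρ v)
  obtain ⟨e, -, he⟩ := hR () hρ
  exact ⟨e, he⟩

theorem RealizableIffTrue.ex {φ : PFml} (x : ℕ) (hφ : RealizableIffTrue φ) :
    RealizableIffTrue (.ex x φ) := by
  refine fun ρ => ⟨fun ⟨e, he⟩ => ⟨_, (hφ _).1 ⟨_, he⟩⟩, fun ⟨a, ha⟩ => ?_⟩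
  obtain ⟨e, he⟩ := (hφ _).2 ha
  refine ⟨primePair a e, ?_⟩
  simpa only [Realizes, pexp_zero_primePair, pexp_one_primePair] using he

namespace SelfRealizing

variable {φ ψ : PFml}

theorem bot : SelfRealizing .bot where
  sound := id
  complete _ := ⟨fun _ => Part.some 0, Computable.const 0, fun _ h => h.elim⟩

theorem atom (i : ℕ) (args : List PTerm) : SelfRealizing (.atom i args) where
  sound h := h.2
  complete _ := ⟨fun _ => Part.some 0, Computable.const 0, fun _ h => ⟨0, Part.mem_some 0, rfl, h⟩⟩

theorem and (hφ : SelfRealizing φ) (hψ : SelfRealizing ψ) : SelfRealizing (φ.and ψ) where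
  sound h := ⟨hφ.sound h.1, hψ.sound h.2⟩
  complete hρ := by
    obtain ⟨R, hR, hRφ⟩ := hφ.complete hρ
    obtain ⟨T, hT, hTψ⟩ := hψ.complete hρ
    refine ⟨fun a => (R a).bind fun d => (T a).map (primePair d), ?_, fun a ⟨hφa, hψa⟩ => ?_⟩
    · exact hR.bind (partrec_map_primePair (hT.comp Computable.fst))
    · obtain ⟨d, hd, hdφ⟩ := hRφ a hφa
      obtain ⟨e, he, heψ⟩ := hTψ a hψa
      refine ⟨primePair d e, Part.mem_bind hd (Part.mem_map _ he), ?_⟩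
      simpa only [Realizes, pexp_zero_primePair, pexp_one_primePair] using ⟨hdφ, heψ⟩

theorem or (hφ : SelfRealizing φ) (hψ : SelfRealizing ψ) (hφ' : SigmaOneTruth φ)
    (hψ' : SigmaOneTruth ψ) : SelfRealizing (φ.or ψ) where
  sound h := h.imp (fun h => hφ.sound h.2) fun h => hψ.sound h.2
  complete {α} _ ρ hρ := by
    obtain ⟨R, hR, hRφ⟩ := hφ.complete hρ
    obtain ⟨T, hT, hTψ⟩ := hψ.complete hρ
    have heq (k : ℕ) : PrimrecPred fun b : α × ℕ => b.2 = k :=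
      Primrec.eq.comp Primrec.snd (Primrec.const k)
    have hchoice : SigmaOnePred fun b : α × ℕ =>
        b.2 = 0 ∧ TrueStd (ρ b.1) φ ∨ b.2 = 1 ∧ TrueStd (ρ b.1) ψ :=
      ((SigmaOnePred.of_primrecPred (heq 0)).and ((hφ' α ρ hρ).comp Primrec.fst)).or
        ((SigmaOnePred.of_primrecPred (heq 1)).and ((hψ' α ρ hρ).comp Primrec.fst))
    obtain ⟨S, hS, hSspec⟩ := hchoice.exists_partrec_choice
    refine ⟨fun a => (S a).bind fun i => bif decide (i = 0) then (R a).map (primePair i) else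
      (T a).map (primePair i), ?_, fun a ha => ?_⟩
    · exact hS.bind (Partrec.cond (heq 0).decide.to_comp
        (partrec_map_primePair (hR.comp Computable.fst))
        (partrec_map_primePair (hT.comp Computable.fst)))
    · obtain ⟨i, hi, ⟨rfl, hφa⟩ | ⟨rfl, hψa⟩⟩ := hSspec a <|
        ha.elim (fun h => ⟨0, .inl ⟨rfl, h⟩⟩) fun h => ⟨1, .inr ⟨rfl, h⟩⟩
      · obtain ⟨e, he, heφ⟩ := hRφ a hφa
        refine ⟨primePair 0 e, Part.mem_bind hi (Part.mem_map _ he), .inl ?_⟩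
        exact ⟨pexp_zero_primePair 0 e, by rwa [pexp_one_primePair]⟩
      · obtain ⟨e, he, heψ⟩ := hTψ a hψa
        refine ⟨primePair 1 e, Part.mem_bind hi (Part.mem_map _ he), .inr ?_⟩
        exact ⟨pexp_zero_primePair 1 e, by rwa [pexp_one_primePair]⟩

theorem imp (hφ : RealizableIffTrue φ) (hψ : SelfRealizing ψ) : SelfRealizing (φ.imp ψ) where
  sound h hφρ := by
    obtain ⟨d, hd⟩ := (hφ _).2 hφρ
    obtain ⟨e, -, he⟩ := h d hd
    exact hψ.sound he
  complete hρ := by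
    obtain ⟨R, hR, hRψ⟩ := hψ.complete hρ
    obtain ⟨c, hc, hcR⟩ := exists_computable_index (hR.comp Computable.fst)
    refine ⟨fun a => Part.some (c a), hc, fun a h => ⟨c a, Part.mem_some _, fun d hd => ?_⟩⟩
    rw [hcR]
    exact hRψ a (h ((hφ _).1 ⟨d, hd⟩))

theorem not (hφ : RealizableIffTrue φ) : SelfRealizing φ.not :=
  imp hφ bot

theorem all (x : ℕ) (hφ : SelfRealizing φ) : SelfRealizing (.all x φ) where
  sound h a := by
    obtain ⟨e, -, he⟩ := h a
    exact hφ.sound he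
  complete hρ := by
    obtain ⟨R, hR, hRφ⟩ := hφ.complete (hρ.update x)
    obtain ⟨c, hc, hcR⟩ := exists_computable_index hR
    refine ⟨fun a => Part.some (c a), hc, fun a h => ⟨c a, Part.mem_some _, fun n => ?_⟩⟩
    rw [hcR]
    exact hRφ (a, n) (h n)

theorem alls (xs : List ℕ) (hφ : SelfRealizing φ) : SelfRealizing (alls xs φ) := by
  induction xs with
  | nil => exact hφ
  | cons x xs ih => exact ih.all x

theorem ex (x : ℕ) (hφ : SelfRealizing φ) (hφ' : SigmaOneTruth φ) :
    SelfRealizing (.ex x φ) where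
  sound h := ⟨_, hφ.sound h⟩
  complete hρ := by
    obtain ⟨R, hR, hRφ⟩ := hφ.complete (hρ.update x)
    obtain ⟨S, hS, hSspec⟩ := (hφ' _ _ (hρ.update x)).exists_partrec_choice
    refine ⟨fun a => (S a).bind fun n => (R (a, n)).map (primePair n), ?_, fun a ha => ?_⟩
    · exact hS.bind (partrec_map_primePair hR)
    · obtain ⟨n, hn, hφn⟩ := hSspec a ha
      obtain ⟨e, he, heφ⟩ := hRφ (a, n) hφn
      refine ⟨primePair n e, Part.mem_bind hn (Part.mem_map _ he), ?_⟩
      simpa only [Realizes, pexp_zero_primePair, pexp_one_primePair] using heφ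

theorem leF (z x : ℕ) (t : PTerm) : SelfRealizing (leF z x t) :=
  .ex z (.atom _ _) (PrimrecTruth.atom (.inr (.inr ⟨rfl, zero_le_one⟩))).sigmaOneTruth

theorem ball (x z : ℕ) (t : PTerm) (hφ : SelfRealizing φ) :
    SelfRealizing (.all x ((Cpc.leF z x t).imp φ)) :=
  .all x (.imp (leF z x t).realizableIffTrue hφ)

theorem bex (x z : ℕ) (t : PTerm) (hφ : SelfRealizing φ) (hφ' : SigmaOneTruth φ) :
    SelfRealizing (.ex x ((Cpc.leF z x t).and φ)) :=
  .ex x ((leF z x t).and hφ) ((SigmaOneTruth.leF z x t).and hφ')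

theorem msub {s : ℕ → PTerm} (hs : φ.FreeForM s) (hφ : SelfRealizing φ) :
    SelfRealizing (φ.msub s) where
  sound h := (trueStd_msub hs fun _ _ => rfl).2
    (hφ.sound ((realizes_msub stdInterp hs (fun _ _ => rfl) _).1 h))
  complete hρ := by
    obtain ⟨R, hR, hRφ⟩ := hφ.complete fun v => hρ.eval_term (s v)
    refine ⟨R, hR, fun a ha => ?_⟩
    obtain ⟨e, he, heφ⟩ := hRφ a ((trueStd_msub hs fun _ _ => rfl).1 ha)
    exact ⟨e, he, (realizes_msub stdInterp hs (fun _ _ => rfl) e).2 heφ⟩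

theorem bigAnd {l : List PFml} (hl : ∀ φ ∈ l, SelfRealizing φ) : SelfRealizing (bigAnd l) := by
  induction l with
  | nil => exact imp bot.realizableIffTrue bot
  | cons φ l ih => exact and (hl φ List.mem_cons_self) (ih fun ψ hψ => hl ψ (.tail φ hψ))

end SelfRealizing

theorem IsDelta0.selfRealizing {φ : PFml} (h : IsDelta0 φ) : SelfRealizing φ := by
  induction h with
  | bot => exact .bot
  | atom _ => exact .atom _ _
  | and _ _ ihφ ihψ => exact ihφ.and ihψ
  | or hφ hψ ihφ ihψ =>
    exact ihφ.or ihψ hφ.primrecTruth.sigmaOneTruth hψ.primrecTruth.sigmaOneTruth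
  | imp _ _ ihφ ihψ => exact .imp ihφ.realizableIffTrue ihψ
  | ball _ _ _ _ ih => exact ih.ball _ _ _
  | bex _ _ _ hφ ih => exact ih.bex _ _ _ hφ.primrecTruth.sigmaOneTruth

theorem IsSigma.selfRealizing {φ : PFml} (h : IsSigma φ) : SelfRealizing φ := by
  induction h with
  | delta0 h => exact h.selfRealizing
  | and _ _ ihφ ihψ => exact ihφ.and ihψ
  | or hφ hψ ihφ ihψ => exact ihφ.or ihψ hφ.sigmaOneTruth hψ.sigmaOneTruth
  | ball _ _ _ _ ih => exact ih.ball _ _ _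
  | bex _ _ _ hφ ih => exact ih.bex _ _ _ hφ.sigmaOneTruth
  | ex hφ ih => exact ih.ex _ hφ.sigmaOneTruth

/-! ### The enumeration `g` -/

theorem lrAux_surjective : Function.Surjective lrAux
  | (0, 0) => ⟨0, rfl⟩
  | (0, y + 1) =>
    have ⟨n, hn⟩ := lrAux_surjective (y, 0)
    ⟨n + 1, by simp [lrAux, hn]⟩
  | (x + 1, y) =>
    have ⟨n, hn⟩ := lrAux_surjective (x, y + 1)
    ⟨n + 1, by simp [lrAux, hn]⟩
termination_by p => (p.1 + p.2, p.1)
decreasing_by all_goals grind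

theorem lstar_eq_iterate (x y : ℕ) : lstar x y = cl^[y] x := by
  induction y with
  | zero => rfl
  | succ y ih => rw [lstar, ih, Function.iterate_succ_apply']

theorem exists_g_eq (n : ℕ) (f : ℕ → ℕ) : ∃ v, ∀ x < n, g v x = f x := by
  induction n generalizing f with
  | zero => exact ⟨0, fun x hx => absurd hx x.not_lt_zero⟩
  | succ n ih =>
    obtain ⟨w, hw⟩ := ih fun x => f (x + 1)
    obtain ⟨v, hv⟩ := lrAux_surjective (w, f 0)
    refine ⟨v, fun x hx => ?_⟩
    cases x with
    | zero => simp only [g, lstar, cr, hv]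
    | succ x =>
      rw [← hw x (Nat.lt_of_succ_lt_succ hx), g, g, lstar_eq_iterate, lstar_eq_iterate,
        Function.iterate_succ_apply, cl, hv]

theorem primrec_lrAux : Primrec lrAux := by
  have hstep : Primrec fun p : ℕ × ℕ => if p.2 = 0 then (0, p.1 + 1) else (p.1 + 1, p.2 - 1) :=
    Primrec.ite (Primrec.eq.comp Primrec.snd (Primrec.const 0))
      ((Primrec.const 0).pair (Primrec.succ.comp Primrec.fst))
      ((Primrec.succ.comp Primrec.fst).pair (Primrec.pred.comp Primrec.snd))
  refine (Primrec.nat_rec₁ (0, 0) (hstep.comp Primrec.snd).to₂).of_eq fun n => ?_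
  induction n with
  | zero => rfl
  | succ n ih => simp only [lrAux, ← ih]

theorem primrec₂_g : Primrec₂ g := by
  have hcl : Primrec cl := Primrec.fst.comp primrec_lrAux
  have hlstar : Primrec₂ lstar :=
    (Primrec.nat_iterate Primrec.snd Primrec.fst (hcl.comp Primrec.snd).to₂).of_eq
      fun p => (lstar_eq_iterate p.1 p.2).symm
  exact (Primrec.snd.comp primrec_lrAux).comp hlstar

/-! ### The axioms of intuitionistic Robinson arithmetic -/

theorem trueStd_bigAnd {ρ : ℕ → ℕ} {l : List PFml} :
    TrueStd ρ (bigAnd l) ↔ ∀ φ ∈ l, TrueStd ρ φ := by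
  induction l with
  | nil => simp [bigAnd, TrueStd]
  | cons φ l ih => exact (and_congr_right' ih).trans List.forall_mem_cons.symm

theorem selfRealizing_of_mem_IRAstarAxioms : ∀ φ ∈ IRAstarAxioms, SelfRealizing φ := by
  simp only [IRAstarAxioms, List.forall_mem_cons, List.not_mem_nil, IsEmpty.forall_iff,
    implies_true, and_true]
  and_intros
  all_goals
    first
    | refine .alls _ (IsSigma.selfRealizing ?_)
    | refine .all _ (IsSigma.selfRealizing ?_)
    | refine IsSigma.selfRealizing ?_
    repeat' first | apply IsSigma.ex | apply IsSigma.or | apply IsSigma.delta0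
    repeat' first
      | exact IsDelta0.bot
      | exact IsDelta0.atom (by simp [arithSlot])
      | apply IsDelta0.imp
      | apply IsDelta0.and

section TruthOfAtoms

variable {ρ : ℕ → ℕ} {t u w : PTerm}

theorem trueStd_vZ : TrueStd ρ (vZ t) ↔ t.eval ρ = 0 := Iff.rfl

theorem trueStd_vE : TrueStd ρ (vE t u) ↔ t.eval ρ = u.eval ρ := Iff.rfl

theorem trueStd_vS : TrueStd ρ (vS t u) ↔ t.eval ρ + 1 = u.eval ρ := Iff.rfl

theorem trueStd_vA : TrueStd ρ (vA t u w) ↔ t.eval ρ + u.eval ρ = w.eval ρ := Iff.rfl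

theorem trueStd_vM : TrueStd ρ (vM t u w) ↔ t.eval ρ * u.eval ρ = w.eval ρ := Iff.rfl

end TruthOfAtoms

theorem trueStd_of_mem_IRAstarAxioms (ρ : ℕ → ℕ) : ∀ φ ∈ IRAstarAxioms, TrueStd ρ φ := by
  simp only [IRAstarAxioms, List.forall_mem_cons, List.not_mem_nil, IsEmpty.forall_iff,
    implies_true, and_true]
  and_intros
  all_goals
    simp only [alls, List.foldr_cons, List.foldr_nil, TrueStd, PFml.not, trueStd_vZ, trueStd_vE,
      trueStd_vS, trueStd_vA, trueStd_vM, PTerm.eval, Function.update_apply, reduceIte,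
      Nat.reduceEqDiff]
    first
    | grind
    | exact fun a => (Nat.eq_zero_or_eq_succ_pred a).imp_right fun ha => ⟨_, ha.symm⟩

/-! ### The axioms on `G` and `B` -/

theorem PFml.freeForM_of_fv_subset {φ : PFml} {s : ℕ → PTerm} {S : Finset ℕ} {m : ℕ}
    (hfv : φ.fv ⊆ S) (hbv : ∀ v ∈ φ.bv, m ≤ v) (hs : ∀ u ∈ S, ∀ v ∈ (s u).fv, v < m) :
    φ.FreeForM s :=
  freeForM_of_bv fun u hu v hv _ hvu => (hs u (hfv hu) v hvu).not_ge (hbv v hv)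

section FormulaG

variable {G : PFml} (hGfv : G.fv ⊆ {0, 1, 2}) (hGbv : ∀ v ∈ G.bv, 10 ≤ v)

include hGfv hGbv

theorem selfRealizing_A26 (hG : SelfRealizing G) : SelfRealizing (A26 G) :=
  have hfree : G.FreeForM (sub1 2 (.var 3)) := PFml.freeForM_of_fv_subset hGfv hGbv (by decide)
  .alls _ (.imp (hG.and (hG.msub hfree)).realizableIffTrue (.atom _ _))

theorem trueStd_A26 (hGdef : ∀ ρ, TrueStd ρ G ↔ K (ρ 0) (ρ 1) = Part.some (ρ 2)) (ρ : ℕ → ℕ) :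
    TrueStd ρ (A26 G) := by
  have hfree : G.FreeForM (sub1 2 (.var 3)) := PFml.freeForM_of_fv_subset hGfv hGbv (by decide)
  intro x y z₁ z₂ ⟨h₁, h₂⟩
  have hz₁ : K x y = Part.some z₁ := (hGdef _).1 h₁
  have hz₂ : K x y = Part.some z₂ := (hGdef _).1 ((trueStd_msub hfree fun _ _ => rfl).1 h₂)
  exact Part.some_injective (hz₁.symm.trans hz₂)

theorem freeForM_Hfml : G.FreeForM fun v =>
    if v = 0 then .var 1 else if v = 1 then .var 0 else if v = 2 then .var 5 else .var v :=
  PFml.freeForM_of_fv_subset hGfv hGbv (by decide)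

theorem selfRealizing_Hfml (hG : SelfRealizing G) (hG' : SigmaOneTruth G) :
    SelfRealizing (Hfml G) :=
  have hfree := freeForM_Hfml hGfv hGbv
  .ex _ (.and (.atom _ _) (hG.msub hfree))
    (.and (PrimrecTruth.atom (.inl ⟨rfl, rfl⟩)).sigmaOneTruth (hG'.msub hfree))

theorem trueStd_Hfml (hGdef : ∀ ρ, TrueStd ρ G ↔ K (ρ 0) (ρ 1) = Part.some (ρ 2)) (ρ : ℕ → ℕ) :
    TrueStd ρ (Hfml G) ↔ K (ρ 1) (ρ 0) = Part.some 0 := by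
  simp only [Hfml, TrueStd, trueStd_vZ, trueStd_msub (freeForM_Hfml hGfv hGbv) fun _ _ => rfl,
    hGdef]
  exact exists_eq_left

end FormulaG

section FormulaB

variable {B : PFml}

theorem freeForM_B40 (hBfv : B.fv ⊆ {0, 1}) (hBbv : ∀ v ∈ B.bv, 10 ≤ v) :
    B.FreeForM fun v => if v = 0 then .var 4 else if v = 1 then .var 0 else .var v :=
  PFml.freeForM_of_fv_subset hBfv hBbv (by decide)

theorem selfRealizing_B40 (hBfv : B.fv ⊆ {0, 1}) (hBbv : ∀ v ∈ B.bv, 10 ≤ v)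
    (hB : SelfRealizing B) : SelfRealizing (B40 B) :=
  hB.msub (freeForM_B40 hBfv hBbv)

theorem trueStd_B40 (hBfv : B.fv ⊆ {0, 1}) (hBbv : ∀ v ∈ B.bv, 10 ≤ v)
    (hBdef : ∀ ρ, TrueStd ρ B ↔ g (ρ 0) (ρ 1) = 1) (ρ : ℕ → ℕ) :
    TrueStd ρ (B40 B) ↔ g (ρ 4) (ρ 0) = 1 :=
  (trueStd_msub (freeForM_B40 hBfv hBbv) fun _ _ => rfl).trans (hBdef _)

theorem selfRealizing_A28 (hB : SelfRealizing B) (hB' : PrimrecTruth B) :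
    SelfRealizing (A28 B) :=
  .alls _ (.or hB (.not hB.realizableIffTrue) hB'.sigmaOneTruth hB'.not.sigmaOneTruth)

theorem trueStd_A28 (ρ : ℕ → ℕ) : TrueStd ρ (A28 B) :=
  fun _ _ => em _

theorem primrecTruth_of_trueStd_iff_g (hBdef : ∀ ρ, TrueStd ρ B ↔ g (ρ 0) (ρ 1) = 1) :
    PrimrecTruth B := fun _ _ _ hρ =>
  (Primrec.eq.comp (primrec₂_g.comp (hρ 0) (hρ 1)) (Primrec.const 1)).of_eq
    fun _ => (hBdef _).symm

end FormulaB

theorem selfRealizing_A27 {G B : PFml} (hB : SelfRealizing (B40 B)) (hH : SelfRealizing (Hfml G)) :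
    SelfRealizing (A27 G B) :=
  have hiff : SelfRealizing ((B40 B).iff (Hfml G)) :=
    .and (.imp hB.realizableIffTrue hH) (.imp hH.realizableIffTrue hB)
  .alls _ (.not (SelfRealizing.not (.ex _ (hiff.ball _ _ _).realizableIffTrue)).realizableIffTrue)

theorem trueStd_A27 {G B : PFml} (hB : ∀ ρ, TrueStd ρ (B40 B) ↔ g (ρ 4) (ρ 0) = 1)
    (hH : ∀ ρ, TrueStd ρ (Hfml G) ↔ K (ρ 1) (ρ 0) = Part.some 0) (ρ : ℕ → ℕ) :
    TrueStd ρ (A27 G B) := by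
  classical
  refine fun y z hn => hn ?_
  obtain ⟨v, hv⟩ := exists_g_eq (z + 1) fun x => if K y x = Part.some 0 then 1 else 0
  refine ⟨v, (trueStd_ball (by decide) (by decide) (by decide)).2 fun x hx => ?_⟩
  have hgK : g v x = 1 ↔ K y x = Part.some 0 := by simp [hv x (Nat.lt_succ_of_le hx)]
  exact iff_def.1 (((hB _).trans hgK).trans (hH _).symm)

theorem selfRealizing_Qfml {G B : PFml} (h₂₆ : SelfRealizing (A26 G))
    (h₂₇ : SelfRealizing (A27 G B)) (h₂₈ : SelfRealizing (A28 B)) : SelfRealizing (Qfml G B) :=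
  .bigAnd <| List.forall_mem_append.2
    ⟨selfRealizing_of_mem_IRAstarAxioms, by simpa using ⟨h₂₆, h₂₇, h₂₈⟩⟩

theorem trueStd_Qfml {G B : PFml} {ρ : ℕ → ℕ} (h₂₆ : TrueStd ρ (A26 G))
    (h₂₇ : TrueStd ρ (A27 G B)) (h₂₈ : TrueStd ρ (A28 B)) : TrueStd ρ (Qfml G B) :=
  trueStd_bigAnd.2 <| List.forall_mem_append.2
    ⟨trueStd_of_mem_IRAstarAxioms ρ, by simpa using ⟨h₂₆, h₂₇, h₂₈⟩⟩

end Cpc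

/-- the closed arithmetical formula `Q` (the conjunction of `A₁ – A₂₈`)
is realizable under Kleene recursive realizability. -/
theorem Q_realizable (G B : Cpc.PFml)
    (hGfv : G.fv ⊆ {0, 1, 2}) (hGbv : ∀ v ∈ G.bv, 10 ≤ v) (hGsig : Cpc.IsSigma G)
    (hGdef : ∀ ρ : ℕ → ℕ, Cpc.TrueStd ρ G ↔ Cpc.K (ρ 0) (ρ 1) = Part.some (ρ 2))
    (hBfv : B.fv ⊆ {0, 1}) (hBbv : ∀ v ∈ B.bv, 10 ≤ v) (hBsig : Cpc.IsSigma B)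
    (hBdef : ∀ ρ : ℕ → ℕ, Cpc.TrueStd ρ B ↔ Cpc.g (ρ 0) (ρ 1) = 1) :
    ∃ e, Cpc.Realizes Cpc.stdInterp Cpc.rho0 e (Cpc.Qfml G B) := by
  have hQ : Cpc.SelfRealizing (Cpc.Qfml G B) := Cpc.selfRealizing_Qfml
    (Cpc.selfRealizing_A26 hGfv hGbv hGsig.selfRealizing)
    (Cpc.selfRealizing_A27 (Cpc.selfRealizing_B40 hBfv hBbv hBsig.selfRealizing)
      (Cpc.selfRealizing_Hfml hGfv hGbv hGsig.selfRealizing hGsig.sigmaOneTruth))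
    (Cpc.selfRealizing_A28 hBsig.selfRealizing (Cpc.primrecTruth_of_trueStd_iff_g hBdef))
  have hQtrue : Cpc.TrueStd Cpc.rho0 (Cpc.Qfml G B) := Cpc.trueStd_Qfml
    (Cpc.trueStd_A26 hGfv hGbv hGdef Cpc.rho0)
    (Cpc.trueStd_A27 (Cpc.trueStd_B40 hBfv hBbv hBdef) (Cpc.trueStd_Hfml hGfv hGbv hGdef) Cpc.rho0)
    (Cpc.trueStd_A28 Cpc.rho0)
  exact (hQ.realizableIffTrue Cpc.rho0).2 hQtrue
end
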